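/- Let K and L be convex bodies in ℝ³, both centrally symmetric about the origin O, with L contained in the interior of K and L strictly convex. Suppose that for every point z on the boundary of K the graze Σ(L,z) is contained in a plane Δ_z, and that K is almost free with respect to L. Then for every unit vector u ∈ S² there exists a unit vector v(u) ∈ S² such that for every x ∈ u^⊥ ∩ bd K, the plane Δ_x is parallel to v(u), i.e., v(u) lies in the direction (the 2-dimensional linear subspace of which Δ_x is a translate) of Δ_x. -/

import Mathlib

open Metric Set

noncomputable section

/-- The ambient space ℝ³. -/
abbrev E3 := EuclideanSpace ℝ (Fin 3)

/-- The cone generated by `L` with apex `x`: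
`C(L,x) = {x + λ (y - x) : y ∈ L, λ ≥ 0}`. -/
def coneGen (L : Set E3) (x : E3) : Set E3 :=
  {p | ∃ y ∈ L, ∃ l : ℝ, 0 ≤ l ∧ p = x + l • (y - x)}

/-- The support cone `S(L,x)` of `L` from `x`, the boundary of `C(L,x)`. -/
def suppCone (L : Set E3) (x : E3) : Set E3 := frontier (coneGen L x)

/-- The graze `Σ(L,x) = S(L,x) ∩ bd L`. -/
def graze (L : Set E3) (x : E3) : Set E3 := suppCone L x ∩ frontier L

/-- An affine subspace of `ℝ³` is a plane if its direction is 2-dimensional. -/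
def IsPlane (P : AffineSubspace ℝ E3) : Prop :=
  Module.finrank ℝ P.direction = 2

/-- The line through two points. -/
def lineThrough (a b : E3) : Set E3 := ↑(affineSpan ℝ ({a, b} : Set E3))

/-- `K` is almost free with respect to `L` (given the planes `Δ z` containing the
grazes `Σ(L,z)` for `z ∈ bd K`): for every `z ∈ bd K` and every
`w ∈ Π_z ∩ bd K`, where `Π_z` is the plane through the origin parallel to `Δ z`,
the line through `z` and `w` does not meet `L`. -/
def AlmostFree (K L : Set E3) (Δ : E3 → AffineSubspace ℝ E3) : Prop :=
  ∀ z ∈ frontier K, ∀ w ∈ (↑(Δ z).direction : Set E3) ∩ frontier K,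
    Disjoint (lineThrough z w) L


/-! ### Coordinate algebra -/

/-- coordinate inner product -/
def ip (a b : E3) : ℝ := a 0 * b 0 + a 1 * b 1 + a 2 * b 2

/-- cross product -/
def cr (a b : E3) : E3 :=
  !₂[a 1 * b 2 - a 2 * b 1, a 2 * b 0 - a 0 * b 2, a 0 * b 1 - a 1 * b 0]

theorem ip_eq_inner (a b : E3) : ip a b = inner ℝ a b := by
  simp only [ip, PiLp.inner_apply, Fin.sum_univ_three]
  simp
  ring

theorem ip_comm (a b : E3) : ip a b = ip b a := by simp only [ip]; ring
theorem ip_add_left (a b c : E3) : ip (a + b) c = ip a c + ip b c := by simp [ip]; ring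
theorem ip_add_right (a b c : E3) : ip a (b + c) = ip a b + ip a c := by simp [ip]; ring
theorem ip_sub_left (a b c : E3) : ip (a - b) c = ip a c - ip b c := by simp [ip]; ring
theorem ip_sub_right (a b c : E3) : ip a (b - c) = ip a b - ip a c := by simp [ip]; ring
theorem ip_smul_left (t : ℝ) (a b : E3) : ip (t • a) b = t * ip a b := by simp [ip]; ring
theorem ip_smul_right (t : ℝ) (a b : E3) : ip a (t • b) = t * ip a b := by simp [ip]; ring
theorem ip_neg_left (a b : E3) : ip (-a) b = - ip a b := by simp [ip]; ring
theorem ip_neg_right (a b : E3) : ip a (-b) = - ip a b := by simp [ip]; ring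
theorem ip_zero_left (a : E3) : ip 0 a = 0 := by simp [ip]
theorem ip_zero_right (a : E3) : ip a 0 = 0 := by simp [ip]

theorem ip_self (a : E3) : ip a a = ‖a‖ ^ 2 := by
  rw [ip_eq_inner, real_inner_self_eq_norm_sq]

theorem ip_self_pos {a : E3} (h : a ≠ 0) : 0 < ip a a := by
  rw [ip_self]; have := norm_pos_iff.mpr h; positivity

theorem ip_self_eq_zero {a : E3} (h : ip a a = 0) : a = 0 := by
  by_contra h'; exact (ip_self_pos h').ne' h

theorem continuous_ip : Continuous fun x : E3 × E3 => ip x.1 x.2 := by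
  simp only [ip_eq_inner]; fun_prop

theorem Filter.Tendsto.ip {ι : Type*} {l : Filter ι} {f g : ι → E3} {a b : E3}
    (hf : Filter.Tendsto f l (nhds a)) (hg : Filter.Tendsto g l (nhds b)) :
    Filter.Tendsto (fun i => ip (f i) (g i)) l (nhds (ip a b)) := by
  simp only [ip_eq_inner]; exact hf.inner hg

theorem ext3 {a b : E3} (h0 : a 0 = b 0) (h1 : a 1 = b 1) (h2 : a 2 = b 2) : a = b := by
  ext i; fin_cases i <;> assumption

theorem cr_0 (a b : E3) : cr a b 0 = a 1 * b 2 - a 2 * b 1 := by simp [cr]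
theorem cr_1 (a b : E3) : cr a b 1 = a 2 * b 0 - a 0 * b 2 := by simp [cr]
theorem cr_2 (a b : E3) : cr a b 2 = a 0 * b 1 - a 1 * b 0 := by simp [cr]

theorem continuous_cr : Continuous fun x : E3 × E3 => cr x.1 x.2 := by
  unfold cr
  apply (PiLp.continuous_toLp 2 _).comp
  apply continuous_pi
  intro i
  fin_cases i <;> simp <;> fun_prop

theorem Filter.Tendsto.cr {ι : Type*} {l : Filter ι} {f g : ι → E3} {a b : E3}
    (hf : Filter.Tendsto f l (nhds a)) (hg : Filter.Tendsto g l (nhds b)) :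
    Filter.Tendsto (fun i => cr (f i) (g i)) l (nhds (cr a b)) :=
  (continuous_cr.tendsto (a, b)).comp (hf.prodMk_nhds hg)

theorem ip_cr_left (a b : E3) : ip (cr a b) a = 0 := by
  simp only [ip, cr_0, cr_1, cr_2]; ring
theorem ip_cr_right (a b : E3) : ip (cr a b) b = 0 := by
  simp only [ip, cr_0, cr_1, cr_2]; ring
theorem cr_neg_right (a b : E3) : cr a (-b) = - cr a b := by
  apply ext3 <;> simp [cr_0, cr_1, cr_2] <;> ring
theorem cr_smul_right (t : ℝ) (a b : E3) : cr a (t • b) = t • cr a b := by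
  apply ext3 <;> simp [cr_0, cr_1, cr_2] <;> ring
theorem cr_self (a : E3) : cr a a = 0 := by
  apply ext3 <;> simp [cr_0, cr_1, cr_2] <;> ring

/-- dependent vectors -/
theorem cr_eq_zero {u v : E3} (hu : u ≠ 0) (h : cr u v = 0) : ∃ t : ℝ, v = t • u := by
  have h0 : u 1 * v 2 - u 2 * v 1 = 0 := by rw [← cr_0, h]; simp
  have h1 : u 2 * v 0 - u 0 * v 2 = 0 := by rw [← cr_1, h]; simp
  have h2 : u 0 * v 1 - u 1 * v 0 = 0 := by rw [← cr_2, h]; simp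
  have hp := ip_self_pos hu
  refine ⟨ip u v / ip u u, ?_⟩
  have hp' := hp.ne'
  apply ext3 <;> simp only [PiLp.smul_apply, smul_eq_mul] <;> rw [div_mul_eq_mul_div, eq_div_iff hp'] <;>
    simp only [ip]
  · linear_combination u 2 * h1 - u 1 * h2
  · linear_combination u 0 * h2 - u 2 * h0
  · linear_combination u 1 * h0 - u 0 * h1

/-- vectors orthogonal to `u`, `v` are multiples of the cross product -/
theorem cr_span {u v a : E3} (h : cr u v ≠ 0) (hu : ip a u = 0) (hv : ip a v = 0) :
    ∃ t : ℝ, a = t • cr u v := by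
  have hp := (ip_self_pos h).ne'
  refine ⟨ip a (cr u v) / ip (cr u v) (cr u v), ?_⟩
  apply ext3 <;> simp only [PiLp.smul_apply, smul_eq_mul] <;> rw [div_mul_eq_mul_div, eq_div_iff hp] <;>
    simp only [ip, cr_0, cr_1, cr_2] at * 
  · linear_combination (-(u 1 * v 2 - u 2 * v 1) * 0 + (u 0 * (v 1 ^2 + v 2 ^2) - v 0 * (u 1 * v 1 + u 2 * v 2))) * hu + (v 0 * (u 1 ^2 + u 2 ^2) - u 0 * (u 1 * v 1 + u 2 * v 2)) * hv
  · linear_combination (u 1 * (v 0 ^2 + v 2 ^2) - v 1 * (u 0 * v 0 + u 2 * v 2)) * hu + (v 1 * (u 0 ^2 + u 2 ^2) - u 1 * (u 0 * v 0 + u 2 * v 2)) * hv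
  · linear_combination (u 2 * (v 1 ^2 + v 0 ^2) - v 2 * (u 1 * v 1 + u 0 * v 0)) * hu + (v 2 * (u 1 ^2 + u 0 ^2) - u 2 * (u 1 * v 1 + u 0 * v 0)) * hv

/-- a vector orthogonal to the cross product is a combination -/
theorem span2 {u v x : E3} (h : cr u v ≠ 0) (hx : ip (cr u v) x = 0) :
    ∃ s t : ℝ, x = s • u + t • v := by
  have hp := (ip_self_pos h).ne'
  refine ⟨ip (cr x v) (cr u v) / ip (cr u v) (cr u v), ip (cr u x) (cr u v) / ip (cr u v) (cr u v), ?_⟩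
  apply ext3 <;> simp only [PiLp.smul_apply, PiLp.add_apply, smul_eq_mul] <;>
    rw [div_mul_eq_mul_div, div_mul_eq_mul_div, ← add_div, eq_div_iff hp] <;>
    simp only [ip, cr_0, cr_1, cr_2] at * 
  · linear_combination (u 1 * v 2 - u 2 * v 1) * hx
  · linear_combination (u 2 * v 0 - u 0 * v 2) * hx
  · linear_combination (u 0 * v 1 - u 1 * v 0) * hx

/-- three vectors orthogonal to `a ≠ 0` -/
theorem span2' {a u v x : E3} (ha : a ≠ 0) (h : cr u v ≠ 0) (hu : ip a u = 0) (hv : ip a v = 0)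
    (hx : ip a x = 0) : ∃ s t : ℝ, x = s • u + t • v := by
  obtain ⟨t, rfl⟩ := cr_span h hu hv
  apply span2 h
  rw [ip_smul_left] at hx
  rcases mul_eq_zero.mp hx with h' | h'
  · exfalso; apply ha; rw [h', zero_smul]
  · exact h'

/-- a vector orthogonal to three independent ones vanishes -/
theorem eq_zero_of_ip {u v w x : E3} (h : ip (cr u v) w ≠ 0) (hu : ip x u = 0) (hv : ip x v = 0)
    (hw : ip x w = 0) : x = 0 := by
  have h' : cr u v ≠ 0 := by rintro h0; rw [h0, ip_zero_left] at h; exact h rfl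
  obtain ⟨t, rfl⟩ := cr_span h' hu hv
  rw [ip_smul_left] at hw
  rcases mul_eq_zero.mp hw with h1 | h1
  · rw [h1, zero_smul]
  · exact absurd h1 h

theorem exists_perp2 (a b : E3) : ∃ g : E3, g ≠ 0 ∧ ip a g = 0 ∧ ip b g = 0 := by
  have key : ∀ a : E3, ∃ g : E3, g ≠ 0 ∧ ip a g = 0 := by
    intro a
    by_cases h : a 0 = 0 ∧ a 1 = 0
    · refine ⟨!₂[1, 0, 0], ?_, ?_⟩
      · intro h'; have := congrArg (fun x : E3 => x 0) h'; simp at this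
      · simp [ip, h.1]
    · refine ⟨!₂[a 1, - a 0, 0], ?_, ?_⟩
      · intro h'
        have h1 := congrArg (fun x : E3 => x 0) h'
        have h2 := congrArg (fun x : E3 => x 1) h'
        simp at h1 h2
        exact h ⟨h2, h1⟩
      · simp [ip]; ring
  by_cases h : cr a b = 0
  · by_cases ha : a = 0
    · obtain ⟨g, h1, h2⟩ := key b
      exact ⟨g, h1, by rw [ha, ip_zero_left], h2⟩
    · obtain ⟨t, rfl⟩ := cr_eq_zero ha h
      obtain ⟨g, h1, h2⟩ := key a
      exact ⟨g, h1, h2, by rw [ip_smul_left, h2, mul_zero]⟩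
  · exact ⟨cr a b, h, by rw [ip_comm, ip_cr_left], by rw [ip_comm, ip_cr_right]⟩

theorem dual_rep (f : E3 →L[ℝ] ℝ) : ∃ n : E3, ∀ x, f x = ip n x := by
  refine ⟨(InnerProductSpace.toDual ℝ E3).symm f, fun x => ?_⟩
  rw [ip_eq_inner, InnerProductSpace.toDual_symm_apply]

/-- bounded families have ultrafilter limits -/
theorem ultra_lim {ι : Type*} (U : Ultrafilter ι) (f : ι → E3) (R : ℝ)
    (h : ∀ᶠ i in (U : Filter ι), ‖f i‖ ≤ R) : ∃ a, Filter.Tendsto f U (nhds a) := by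
  have hc := (isCompact_closedBall (0 : E3) R)
  have := hc.ultrafilter_le_nhds (U.map f) (by
    rw [Filter.le_principal_iff, Ultrafilter.coe_map, Filter.mem_map]
    filter_upwards [h] with i hi
    simpa using hi)
  obtain ⟨a, -, ha⟩ := this
  exact ⟨a, ha⟩

theorem ultra_lim_real {ι : Type*} (U : Ultrafilter ι) (f : ι → ℝ) (R : ℝ)
    (h : ∀ᶠ i in (U : Filter ι), |f i| ≤ R) : ∃ a, Filter.Tendsto f U (nhds a) := by
  have hc := (isCompact_closedBall (0 : ℝ) R)
  have := hc.ultrafilter_le_nhds (U.map f) (by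
    rw [Filter.le_principal_iff, Ultrafilter.coe_map, Filter.mem_map]
    filter_upwards [h] with i hi
    simpa using hi)
  obtain ⟨a, -, ha⟩ := this
  exact ⟨a, ha⟩

attribute [simp] ip_add_left ip_add_right ip_sub_left ip_sub_right ip_smul_left ip_smul_right
  ip_neg_left ip_neg_right ip_zero_left ip_zero_right ip_cr_left ip_cr_right

/-! ### Support normals and contact points -/

/-- normalized support normals -/
def Nrm (L : Set E3) (n p : E3) : Prop := p ∈ L ∧ ip n p = 1 ∧ ∀ l ∈ L, ip n l ≤ 1

/-- the line through `x` with direction `e` misses `L` -/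
def Vis (L : Set E3) (x e : E3) : Prop := ∀ s : ℝ, x + s • e ∉ L

/-- contact of a support plane through the line `x + ℝ e`, on the side of `cr x e` -/
def Ct (L : Set E3) (x e n p : E3) : Prop :=
  Nrm L n p ∧ ip n x = 1 ∧ ip n e = 0 ∧ 0 < ip (cr x e) p

/-- the assumptions on `L` -/
structure LB (L : Set E3) : Prop where
  comp : IsCompact L
  conv : Convex ℝ L
  strict : StrictConvex ℝ L
  sym : ∀ x ∈ L, -x ∈ L
  ball : ∃ r > 0, closedBall (0 : E3) r ⊆ L

theorem cont_ip (a : E3) : Continuous (ip a) := by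
  have : ip a = fun b => inner ℝ a b := by funext b; exact ip_eq_inner a b
  rw [this]; fun_prop

theorem int_lt {S : Set E3} {n x : E3} {b : ℝ} (hb : ∀ l ∈ S, ip n l ≤ b) (hn : n ≠ 0)
    (hx : x ∈ interior S) : ip n x < b := by
  have hc : Filter.Tendsto (fun t : ℝ => x + t • n) (nhdsWithin 0 (Ioi 0)) (nhds x) := by
    have : Filter.Tendsto (fun t : ℝ => x + t • n) (nhds 0) (nhds (x + (0:ℝ) • n)) := by
      apply Continuous.tendsto; fun_prop
    rw [zero_smul, add_zero] at this
    exact this.mono_left nhdsWithin_le_nhds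
  have h1 := hc.eventually (mem_interior_iff_mem_nhds.mp hx)
  obtain ⟨t, ht, ht0⟩ := (h1.and self_mem_nhdsWithin).exists
  have := hb _ ht
  have hp := ip_self_pos hn
  have ht0 : 0 < t := ht0
  simp at this
  nlinarith

theorem Nrm.ne_zero {L : Set E3} {n p : E3} (h : Nrm L n p) : n ≠ 0 := by
  rintro rfl
  have := h.2.1
  simp at this

theorem LB.zero_mem {L : Set E3} (hL : LB L) : (0 : E3) ∈ L := by
  obtain ⟨r, hr, h⟩ := hL.ball
  exact h (by simp [hr.le])

theorem nrm_lt {L : Set E3} (hL : LB L) {n p l : E3} (h : Nrm L n p) (hl : l ∈ L) (hlp : l ≠ p) :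
    ip n l < 1 := by
  have hm : (1/2 : ℝ) • l + (1/2 : ℝ) • p ∈ interior L :=
    hL.strict hl h.1 hlp (by norm_num) (by norm_num) (by norm_num)
  have := int_lt h.2.2 h.ne_zero hm
  have h1 := h.2.1
  simp at this
  linarith

theorem nrm_unique {L : Set E3} (hL : LB L) {n p l : E3} (h : Nrm L n p) (hl : l ∈ L)
    (h1 : ip n l = 1) : l = p := by
  by_contra hc
  exact (nrm_lt hL h hl hc).ne h1

theorem nrm_neg {L : Set E3} (hL : LB L) {n p : E3} (h : Nrm L n p) : Nrm L (-n) (-p) := by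
  refine ⟨hL.sym _ h.1, by simpa using h.2.1, fun l hl => ?_⟩
  have := h.2.2 _ (hL.sym _ hl)
  simpa using this

theorem exists_pos_mem {L : Set E3} (hL : LB L) (m : E3) : ∃ t : ℝ, t > 0 ∧ t • m ∈ L := by
  obtain ⟨r, hr, h⟩ := hL.ball
  have hp : 0 < ‖m‖ + 1 := by positivity
  refine ⟨r / (‖m‖ + 1), by positivity, h ?_⟩
  simp only [mem_closedBall, dist_zero_right, norm_smul, Real.norm_eq_abs]
  rw [abs_of_pos (by positivity), div_mul_eq_mul_div, div_le_iff₀ hp]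
  nlinarith [norm_nonneg m]

theorem nrm_bound {L : Set E3} (hL : LB L) : ∃ R, ∀ n p, Nrm L n p → ‖n‖ ≤ R := by
  obtain ⟨r, hr, hb⟩ := hL.ball
  refine ⟨1 / r, fun n p h => ?_⟩
  have hn : 0 < ‖n‖ := norm_pos_iff.mpr h.ne_zero
  have hm : (r / ‖n‖) • n ∈ L := by
    apply hb
    simp only [mem_closedBall, dist_zero_right, norm_smul, Real.norm_eq_abs]
    rw [abs_of_pos (by positivity), div_mul_cancel₀ _ hn.ne']
  have := h.2.2 _ hm
  rw [ip_smul_right, ip_self] at this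
  rw [le_div_iff₀ hr]
  have h2 : r / ‖n‖ * ‖n‖ ^ 2 = ‖n‖ * r := by field_simp
  linarith

theorem mem_bound {L : Set E3} (hL : LB L) : ∃ R, ∀ p ∈ L, ‖p‖ ≤ R := by
  obtain ⟨R, hR⟩ := hL.comp.isBounded.subset_closedBall 0
  exact ⟨R, fun p hp => by simpa using hR hp⟩

theorem vis_sep {L : Set E3} (hL : LB L) {x e : E3} (hv : Vis L x e) :
    ∃ n, ip n x = 1 ∧ ip n e = 0 ∧ ∀ l ∈ L, ip n l < 1 := by
  set A : AffineSubspace ℝ E3 := AffineSubspace.mk' x (Submodule.span ℝ {e}) with hA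
  have hmem : ∀ s : ℝ, x + s • e ∈ A := fun s => by
    rw [hA, AffineSubspace.mem_mk']
    simp [Submodule.mem_span_singleton]
  have hdisj : Disjoint L (A : Set E3) := by
    rw [Set.disjoint_left]
    intro y hy hyA
    have hyA' : y ∈ A := hyA
    rw [hA, AffineSubspace.mem_mk', vsub_eq_sub, Submodule.mem_span_singleton] at hyA'
    obtain ⟨s, hs⟩ := hyA'
    apply hv s
    rw [hs]; simpa using hy
  obtain ⟨f, u, v, h1, h2, h3⟩ := geometric_hahn_banach_compact_closed hL.conv hL.comp A.convex
    (AffineSubspace.closed_of_finiteDimensional A) hdisj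
  obtain ⟨n, hn⟩ := dual_rep f
  have h0 : 0 < u := by
    have := h1 0 hL.zero_mem
    simpa using this
  have hl : ∀ s : ℝ, v < ip n x + s * ip n e := fun s => by
    have := h3 _ (hmem s)
    rw [hn] at this
    simpa using this
  have he : ip n e = 0 := by
    by_contra hne
    have := hl ((v - ip n x) / ip n e)
    rw [div_mul_cancel₀ _ hne] at this
    linarith
  have hx := hl 0
  rw [zero_mul, add_zero] at hx
  have hx0 : 0 < ip n x := by linarith
  refine ⟨(1 / ip n x) • n, by rw [ip_smul_left]; field_simp, by rw [ip_smul_left, he, mul_zero], ?_⟩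
  intro l hl
  have := h1 l hl
  rw [hn] at this
  rw [ip_smul_left, div_mul_eq_mul_div, div_lt_one hx0]
  linarith

theorem vis_not_mem {L : Set E3} {x e : E3} (hv : Vis L x e) : x ∉ L := by
  have := hv 0
  simpa using this

theorem vis_cr {L : Set E3} (hL : LB L) {x e : E3} (hv : Vis L x e) (he : e ≠ 0) : cr x e ≠ 0 := by
  intro h
  have hx : x ≠ 0 := by
    rintro rfl
    exact vis_not_mem hv hL.zero_mem
  obtain ⟨t, rfl⟩ := cr_eq_zero hx h
  have ht : t ≠ 0 := by rintro rfl; simp at he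
  apply hv (-(1/t))
  rw [smul_smul]
  have : -(1/t) * t = -1 := by field_simp
  rw [this]
  simpa using hL.zero_mem

theorem ct_exists {L : Set E3} (hL : LB L) {x e : E3} (hv : Vis L x e) (he : e ≠ 0) :
    ∃ n p, Ct L x e n p := by
  obtain ⟨n0, hx, hne, hlt⟩ := vis_sep hL hv
  set m := cr x e with hm
  have hm0 : m ≠ 0 := vis_cr hL hv he
  have hcont : ContinuousOn (fun l => ip m l / (1 - ip n0 l)) L := by
    apply ContinuousOn.div
    · exact (cont_ip m).continuousOn
    · exact (continuous_const.sub (cont_ip n0)).continuousOn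
    · intro l hl; have := hlt l hl; linarith
  obtain ⟨p, hp, hmax⟩ := hL.comp.exists_isMaxOn ⟨0, hL.zero_mem⟩ hcont
  have hmax' : ∀ l ∈ L, ip m l / (1 - ip n0 l) ≤ ip m p / (1 - ip n0 p) := fun l hl => hmax hl
  have hp1 : 0 < 1 - ip n0 p := by have := hlt p hp; linarith
  have hmp : 0 < ip m p := by
    obtain ⟨t, ht, htm⟩ := exists_pos_mem hL m
    have h1 := hmax' _ htm
    have h2 : 0 < 1 - ip n0 (t • m) := by have := hlt _ htm; linarith
    have h3 : 0 < ip m (t • m) / (1 - ip n0 (t • m)) := by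
      apply div_pos _ h2
      rw [ip_smul_right]
      exact mul_pos ht (ip_self_pos hm0)
    have h4 := h3.trans_le h1
    rw [lt_div_iff₀ hp1] at h4
    linarith
  refine ⟨n0 + ((1 - ip n0 p) / ip m p) • m, p, ⟨hp, ?_, ?_⟩, ?_, ?_, hmp⟩
  · rw [ip_add_left, ip_smul_left, div_mul_cancel₀ _ hmp.ne']; ring
  · intro l hl
    have h1 := hmax' l hl
    have h2 : 0 < 1 - ip n0 l := by have := hlt _ hl; linarith
    rw [div_le_div_iff₀ h2 hp1] at h1
    rw [ip_add_left, ip_smul_left, div_mul_eq_mul_div]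
    have : (1 - ip n0 p) * ip m l / ip m p ≤ 1 - ip n0 l := by
      rw [div_le_iff₀ hmp]; linarith
    linarith
  · simp [hm, hx]
  · simp [hm, hne]

theorem ct_unique {L : Set E3} (hL : LB L) {x e n p n' p' : E3} (hcr : cr x e ≠ 0)
    (h : Ct L x e n p) (h' : Ct L x e n' p') : n = n' ∧ p = p' := by
  obtain ⟨t, ht⟩ := cr_span (a := n - n') hcr
    (by rw [ip_sub_left, h.2.1, h'.2.1, sub_self]) (by rw [ip_sub_left, h.2.2.1, h'.2.2.1, sub_self])
  have h1 : ip (n - n') p = t * ip (cr x e) p := by rw [ht, ip_smul_left]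
  have h2 : ip (n - n') p' = t * ip (cr x e) p' := by rw [ht, ip_smul_left]
  rw [ip_sub_left] at h1 h2
  have a1 := h.1.2.1
  have a2 := h'.1.2.1
  have a3 := h.1.2.2 _ h'.1.1
  have a4 := h'.1.2.2 _ h.1.1
  have b1 := h.2.2.2
  have b2 := h'.2.2.2
  have ht0 : t = 0 := by nlinarith
  rw [ht0, zero_smul, sub_eq_zero] at ht
  subst ht
  exact ⟨rfl, nrm_unique hL h'.1 h.1.1 a1⟩

theorem ct_smul {L : Set E3} {x e n p : E3} (h : Ct L x e n p) {t : ℝ} (ht : 0 < t) :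
    Ct L x (t • e) n p := by
  refine ⟨h.1, h.2.1, by rw [ip_smul_right, h.2.2.1, mul_zero], ?_⟩
  rw [cr_smul_right, ip_smul_left]
  exact mul_pos ht h.2.2.2

theorem cr_shift (x e : E3) (s : ℝ) : cr (x + s • e) e = cr x e := by
  apply ext3 <;> simp [cr_0, cr_1, cr_2] <;> ring

theorem ct_shift {L : Set E3} {x e n p : E3} (h : Ct L x e n p) (s : ℝ) :
    Ct L (x + s • e) e n p := by
  refine ⟨h.1, by simp [h.2.1, h.2.2.1], h.2.2.1, ?_⟩
  rw [cr_shift]; exact h.2.2.2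

theorem vis_smul {L : Set E3} {x e : E3} (h : Vis L x e) (t : ℝ) : Vis L x (t • e) := by
  intro s; rw [smul_smul]; exact h _

theorem vis_neg {L : Set E3} {x e : E3} (h : Vis L x e) : Vis L x (-e) := by
  have := vis_smul h (-1); rwa [neg_one_smul] at this

theorem vis_shift {L : Set E3} {x e : E3} (h : Vis L x e) (t : ℝ) : Vis L (x + t • e) e := by
  intro s
  rw [add_assoc, ← add_smul]; exact h _

/-- two contacts -/
theorem ct_pair {L : Set E3} (hL : LB L) {x e : E3} (hv : Vis L x e) (he : e ≠ 0) :
    ∃ n p m q, Ct L x e n p ∧ Ct L x (-e) m q ∧ p ≠ q ∧ ip n q < 1 ∧ ip m p < 1 := by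
  obtain ⟨n, p, h1⟩ := ct_exists hL hv he
  obtain ⟨m, q, h2⟩ := ct_exists hL (vis_neg hv) (neg_ne_zero.mpr he)
  have hpq : p ≠ q := by
    rintro rfl
    have a := h1.2.2.2
    have b := h2.2.2.2
    rw [cr_neg_right, ip_neg_left] at b
    linarith
  exact ⟨n, p, m, q, h1, h2, hpq, nrm_lt hL h1.1 h2.1.1 hpq.symm, nrm_lt hL h2.1 h1.1.1 hpq⟩

theorem nrm_closed {L : Set E3} (hL : LB L) {ι : Type*} {F : Filter ι} [F.NeBot] {n p : ι → E3}
    {n' p' : E3} (hn : Filter.Tendsto n F (nhds n')) (hp : Filter.Tendsto p F (nhds p'))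
    (h : ∀ᶠ i in F, Nrm L (n i) (p i)) : Nrm L n' p' := by
  refine ⟨?_, ?_, ?_⟩
  · exact hL.comp.isClosed.mem_of_tendsto hp (h.mono fun i hi => hi.1)
  · refine tendsto_nhds_unique (hn.ip hp) ?_
    apply (tendsto_const_nhds (x := (1:ℝ))).congr'
    exact h.mono fun i hi => hi.2.1.symm
  · intro l hl
    exact le_of_tendsto (hn.ip tendsto_const_nhds) (h.mono fun i hi => hi.2.2 l hl)

theorem vis_open {L : Set E3} (hL : LB L) {ι : Type*} {F : Filter ι} {x e : ι → E3} {x' e' : E3}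
    (hx : Filter.Tendsto x F (nhds x')) (he : Filter.Tendsto e F (nhds e')) (he' : e' ≠ 0)
    (hv : Vis L x' e') : ∀ᶠ i in F, Vis L (x i) (e i) := by
  by_contra hc
  rw [Filter.not_eventually] at hc
  have := Filter.frequently_iff_neBot.mp hc
  set U := Ultrafilter.of (F ⊓ Filter.principal {i | ¬ Vis L (x i) (e i)}) with hU
  have hUF : (U : Filter ι) ≤ F := (Ultrafilter.of_le _).trans inf_le_left
  have hUb : ∀ᶠ i in (U : Filter ι), ¬ Vis L (x i) (e i) :=
    ((Ultrafilter.of_le _).trans inf_le_right) (Filter.mem_principal_self _)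
  have hch : ∀ i, ∃ s : ℝ, ¬ Vis L (x i) (e i) → x i + s • e i ∈ L := by
    intro i
    by_cases h : Vis L (x i) (e i)
    · exact ⟨0, fun h' => absurd h h'⟩
    · simp only [Vis, not_forall, not_not] at h
      obtain ⟨s, hs⟩ := h
      exact ⟨s, fun _ => hs⟩
  choose s hs using hch
  obtain ⟨R, hR⟩ := mem_bound hL
  have hx' := hx.mono_left hUF
  have he2 := he.mono_left hUF
  have hpos : 0 < ‖e'‖ := norm_pos_iff.mpr he'
  have b1 : ∀ᶠ i in (U : Filter ι), ‖e'‖ / 2 < ‖e i‖ :=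
    he2.norm.eventually (lt_mem_nhds (by linarith))
  have b2 : ∀ᶠ i in (U : Filter ι), ‖x i‖ < ‖x'‖ + 1 :=
    hx'.norm.eventually (gt_mem_nhds (by linarith))
  obtain ⟨s', hs'⟩ := ultra_lim_real U s ((R + ‖x'‖ + 1) / (‖e'‖ / 2)) (by
    filter_upwards [b1, b2, hUb] with i h1 h2 h3
    have h4 := hR _ (hs i h3)
    rw [le_div_iff₀ (by linarith)]
    have h5 : ‖s i • e i‖ ≤ ‖x i + s i • e i‖ + ‖x i‖ := by
      have := norm_sub_le (x i + s i • e i) (x i)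
      simpa using this
    rw [norm_smul, Real.norm_eq_abs] at h5
    have := abs_nonneg (s i)
    nlinarith)
  have : x' + s' • e' ∈ L :=
    hL.comp.isClosed.mem_of_tendsto (hx'.add (hs'.smul he2)) (hUb.mono fun i hi => hs i hi)
  exact hv s' this

theorem ct_tendsto {L : Set E3} (hL : LB L) {ι : Type*} {F : Filter ι} {x e n p : ι → E3}
    {x' e' n' p' : E3} (hx : Filter.Tendsto x F (nhds x')) (he : Filter.Tendsto e F (nhds e'))
    (he' : e' ≠ 0) (hv : Vis L x' e') (hc' : Ct L x' e' n' p')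
    (hc : ∀ᶠ i in F, Ct L (x i) (e i) (n i) (p i)) :
    Filter.Tendsto n F (nhds n') ∧ Filter.Tendsto p F (nhds p') := by
  obtain ⟨R1, hR1⟩ := nrm_bound hL
  obtain ⟨R2, hR2⟩ := mem_bound hL
  have key : ∀ U : Ultrafilter ι, (U : Filter ι) ≤ F →
      Filter.Tendsto n U (nhds n') ∧ Filter.Tendsto p U (nhds p') := by
    intro U hU
    obtain ⟨n1, hn1⟩ := ultra_lim U n R1 (by filter_upwards [hU hc] with i hi using hR1 _ _ hi.1)
    obtain ⟨p1, hp1⟩ := ultra_lim U p R2 (by filter_upwards [hU hc] with i hi using hR2 _ hi.1.1)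
    have hx1 := hx.mono_left hU
    have he1 := he.mono_left hU
    have c1 : Nrm L n1 p1 := nrm_closed hL hn1 hp1 (by filter_upwards [hU hc] with i hi using hi.1)
    have c2 : ip n1 x' = 1 := by
      refine tendsto_nhds_unique (hn1.ip hx1) ((tendsto_const_nhds (x := (1:ℝ))).congr' ?_)
      filter_upwards [hU hc] with i hi using hi.2.1.symm
    have c3 : ip n1 e' = 0 := by
      refine tendsto_nhds_unique (hn1.ip he1) ((tendsto_const_nhds (x := (0:ℝ))).congr' ?_)
      filter_upwards [hU hc] with i hi using hi.2.2.1.symm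
    have c4 : 0 ≤ ip (cr x' e') p1 :=
      ge_of_tendsto ((hx1.cr he1).ip hp1) (by filter_upwards [hU hc] with i hi using hi.2.2.2.le)
    have hcr := vis_cr hL hv he'
    have c5 : ip (cr x' e') p1 ≠ 0 := by
      intro h0
      obtain ⟨s, t, hst⟩ := span2 hcr h0
      have h1 := c1.2.1
      rw [hst] at h1
      simp [c2, c3] at h1
      rw [h1, one_smul] at hst
      apply hv t
      rw [← hst]; exact c1.1
    have := ct_unique hL hcr hc' ⟨c1, c2, c3, lt_of_le_of_ne c4 c5.symm⟩
    rw [this.1, this.2]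
    exact ⟨hn1, hp1⟩
  constructor
  · rw [Filter.tendsto_iff_ultrafilter]; exact fun U hU => (key U hU).1
  · rw [Filter.tendsto_iff_ultrafilter]; exact fun U hU => (key U hU).2

theorem nrm_graze {L : Set E3} {n p x : E3} (h : Nrm L n p) (hx : ip n x = 1) : p ∈ graze L x := by
  have hp : p ∈ coneGen L x := ⟨p, h.1, 1, zero_le_one, by simp⟩
  refine ⟨⟨subset_closure hp, fun hi => ?_⟩, ⟨subset_closure h.1, fun hi => ?_⟩⟩
  · have := int_lt (b := 1) (n := n) (fun l hl => ?_) h.ne_zero hi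
    · exact this.ne h.2.1
    · obtain ⟨y, hy, l, hl, rfl⟩ := hl
      have := h.2.2 y hy
      simp [hx]
      nlinarith
  · exact (int_lt h.2.2 h.ne_zero hi).ne h.2.1

/-! ### The setup -/

structure Setup (K L : Set E3) (ν : E3 → E3) (c : E3 → ℝ) : Prop where
  lb : LB L
  kcomp : IsCompact K
  kconv : Convex ℝ K
  ksym : ∀ x ∈ K, -x ∈ K
  lk : L ⊆ interior K
  nu0 : ∀ z ∈ frontier K, ν z ≠ 0
  plane : ∀ z ∈ frontier K, ∀ p ∈ graze L z, ip (ν z) p = c z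
  af : ∀ z ∈ frontier K, ∀ w ∈ frontier K, ip (ν z) w = 0 → Vis L z (w - z)

/-- same plane -/
def Same (ν : E3 → E3) (c : E3 → ℝ) (x y : E3) : Prop :=
  ∃ t : ℝ, t ≠ 0 ∧ ν y = t • ν x ∧ c y = t * c x

theorem Same.symm {ν : E3 → E3} {c : E3 → ℝ} {x y : E3} (h : Same ν c x y) : Same ν c y x := by
  obtain ⟨t, ht, h1, h2⟩ := h
  refine ⟨t⁻¹, inv_ne_zero ht, ?_, ?_⟩
  · rw [h1, smul_smul, inv_mul_cancel₀ ht, one_smul]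
  · rw [h2, ← mul_assoc, inv_mul_cancel₀ ht, one_mul]

theorem Same.trans {ν : E3 → E3} {c : E3 → ℝ} {x y z : E3} (h : Same ν c x y) (h' : Same ν c y z) :
    Same ν c x z := by
  obtain ⟨t, ht, h1, h2⟩ := h
  obtain ⟨s, hs, h3, h4⟩ := h'
  exact ⟨s * t, mul_ne_zero hs ht, by rw [h3, h1, smul_smul], by rw [h4, h2, mul_assoc]⟩

theorem Setup.knhds {K L : Set E3} {ν : E3 → E3} {c : E3 → ℝ} (S : Setup K L ν c) :
    K ∈ nhds (0 : E3) := mem_interior_iff_mem_nhds.mp (S.lk S.lb.zero_mem)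

theorem Setup.not_mem {K L : Set E3} {ν : E3 → E3} {c : E3 → ℝ} (S : Setup K L ν c) {z : E3}
    (hz : z ∈ frontier K) : z ∉ L := fun h => hz.2 (S.lk h)

theorem Setup.fmem {K L : Set E3} {ν : E3 → E3} {c : E3 → ℝ} (S : Setup K L ν c) {z : E3} :
    z ∈ frontier K ↔ gauge K z = 1 := (gauge_eq_one_iff_mem_frontier S.kconv S.knhds).symm

theorem Setup.gpos {K L : Set E3} {ν : E3 → E3} {c : E3 → ℝ} (S : Setup K L ν c) {z : E3}
    (hz : z ≠ 0) : 0 < gauge K z :=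
  (gauge_pos (absorbent_nhds_zero S.knhds)
    (NormedSpace.isVonNBounded_of_isBounded ℝ S.kcomp.isBounded)).mpr hz

theorem Setup.gcont {K L : Set E3} {ν : E3 → E3} {c : E3 → ℝ} (S : Setup K L ν c) :
    Continuous (gauge K) := continuous_gauge S.kconv S.knhds

/-- radial projection -/
def pr (K : Set E3) (y : E3) : E3 := (gauge K y)⁻¹ • y

theorem Setup.pr_mem {K L : Set E3} {ν : E3 → E3} {c : E3 → ℝ} (S : Setup K L ν c) {z : E3}
    (hz : z ≠ 0) : pr K z ∈ frontier K := by
  have := S.gpos hz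
  rw [S.fmem, pr, gauge_smul_of_nonneg (by positivity), smul_eq_mul, inv_mul_cancel₀ this.ne']

theorem Setup.pr_tendsto {K L : Set E3} {ν : E3 → E3} {c : E3 → ℝ} (S : Setup K L ν c) {ι : Type*}
    {F : Filter ι} {f : ι → E3} {a : E3} (ha : a ≠ 0) (hf : Filter.Tendsto f F (nhds a)) :
    Filter.Tendsto (fun i => pr K (f i)) F (nhds (pr K a)) :=
  (((S.gcont.tendsto a).comp hf).inv₀ (S.gpos ha).ne').smul hf

theorem Setup.ne_zero {K L : Set E3} {ν : E3 → E3} {c : E3 → ℝ} (S : Setup K L ν c) {z : E3}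
    (hz : z ∈ frontier K) : z ≠ 0 := by
  rintro rfl
  exact S.not_mem hz S.lb.zero_mem

theorem Setup.pr_self {K L : Set E3} {ν : E3 → E3} {c : E3 → ℝ} (S : Setup K L ν c) {z : E3}
    (hz : z ∈ frontier K) : pr K z = z := by
  rw [S.fmem] at hz
  rw [pr, hz, inv_one, one_smul]

theorem Setup.neg_mem {K L : Set E3} {ν : E3 → E3} {c : E3 → ℝ} (S : Setup K L ν c) {z : E3}
    (hz : z ∈ frontier K) : -z ∈ frontier K := by
  rw [S.fmem] at *
  rw [gauge_neg S.ksym]; exact hz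

theorem Setup.pl {K L : Set E3} {ν : E3 → E3} {c : E3 → ℝ} (S : Setup K L ν c) {z n p : E3}
    (hz : z ∈ frontier K) (h : Nrm L n p) (hn : ip n z = 1) : ip (ν z) p = c z :=
  S.plane z hz p (nrm_graze h hn)

/-- A0 -/
theorem Setup.a0 {K L : Set E3} {ν : E3 → E3} {c : E3 → ℝ} (S : Setup K L ν c) {z : E3}
    (hz : z ∈ frontier K) : ip (ν z) z ≠ 0 := by
  intro h
  have := S.af z hz (-z) (S.neg_mem hz) (by rw [ip_neg_right, h, neg_zero]) (1/2)
  apply this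
  have : z + (1/2 : ℝ) • (-z - z) = 0 := by module
  rw [this]; exact S.lb.zero_mem

theorem vis_of_sep {L : Set E3} {n x e : E3} (h1 : ip n x = 1) (h2 : ip n e = 0)
    (h3 : ∀ l ∈ L, ip n l < 1) : Vis L x e := by
  intro s hs
  have := h3 _ hs
  simp [h1, h2] at this

theorem exists_vis {L : Set E3} (hL : LB L) {z : E3} (hz : z ∉ L) (a : E3) :
    ∃ e, e ≠ 0 ∧ Vis L z e ∧ ip a e = 0 := by
  obtain ⟨n0, h1, -, h3⟩ := vis_sep (e := 0) hL (x := z) (by intro s; simpa using hz)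
  obtain ⟨e, he, ha, hb⟩ := exists_perp2 n0 a
  exact ⟨e, he, vis_of_sep h1 ha h3, hb⟩

theorem parallel_of {u v a b : E3} (h : cr u v ≠ 0) (hb : b ≠ 0) (a1 : ip a u = 0) (a2 : ip a v = 0)
    (b1 : ip b u = 0) (b2 : ip b v = 0) : ∃ t : ℝ, a = t • b := by
  obtain ⟨s, rfl⟩ := cr_span h a1 a2
  obtain ⟨t, rfl⟩ := cr_span h b1 b2
  have ht : t ≠ 0 := by rintro rfl; simp at hb
  exact ⟨s / t, by rw [smul_smul, div_mul_cancel₀ _ ht]⟩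

/-- A1 -/
theorem Setup.a1 {K L : Set E3} {ν : E3 → E3} {c : E3 → ℝ} (S : Setup K L ν c) {z : E3}
    (hz : z ∈ frontier K) : ip (ν z) z ≠ c z := by
  intro h
  obtain ⟨e, he, hv, hb⟩ := exists_vis S.lb (S.not_mem hz) (ν z)
  obtain ⟨n, p, m, q, h1, h2, hpq, h3, h4⟩ := ct_pair S.lb hv he
  have p1 := S.pl hz h1.1 h1.2.1
  have p2 := S.pl hz h2.1 h2.2.1
  have hcr : cr e (p - z) ≠ 0 := by
    intro h0
    obtain ⟨t, ht⟩ := cr_eq_zero he h0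
    apply hv t
    rw [← ht]; simpa using h1.1.1
  obtain ⟨t, rfl⟩ := parallel_of (a := n) (b := ν z) hcr (S.nu0 z hz) h1.2.2.1
    (by rw [ip_sub_right, h1.1.2.1, h1.2.1, sub_self]) hb (by rw [ip_sub_right, p1, h, sub_self])
  have := h1.2.1
  rw [ip_smul_left] at this h3
  rw [p2, ← h] at h3
  linarith

theorem sub_vis {L : Set E3} (hL : LB L) {z n p m q : E3} (h1 : Nrm L n p) (h2 : Nrm L m q)
    (z1 : ip n z = 1) (z2 : ip m z = 1) (hpq : p ≠ q) : Vis L z (p - q) := by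
  have a1 := nrm_lt hL h1 h2.1 hpq.symm
  have a2 := nrm_lt hL h2 h1.1 hpq
  have hs : 0 < (1 - ip n q) + (1 - ip m p) := by linarith
  apply vis_of_sep (n := ((1 - ip m p) / ((1 - ip n q) + (1 - ip m p))) • n
    + ((1 - ip n q) / ((1 - ip n q) + (1 - ip m p))) • m)
  · simp [z1, z2]; rw [← add_div]; rw [add_comm]; exact div_self hs.ne'
  · simp [h1.2.1, h2.2.1]; ring
  · intro l hl
    rw [ip_add_left, ip_smul_left, ip_smul_left]
    have b1 := h1.2.2 l hl
    have b2 := h2.2.2 l hl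
    rw [div_mul_eq_mul_div, div_mul_eq_mul_div, ← add_div, div_lt_one hs]
    by_cases hlp : l = p
    · subst hlp
      nlinarith
    · have := nrm_lt hL h1 hl hlp
      nlinarith

theorem three_contacts {L : Set E3} (hL : LB L) {z : E3} (hz : z ∉ L) :
    ∃ p q p' q', cr (p - q) (p' - q') ≠ 0 ∧ (∃ n, Nrm L n p ∧ ip n z = 1) ∧
      (∃ n, Nrm L n q ∧ ip n z = 1) ∧ (∃ n, Nrm L n p' ∧ ip n z = 1) ∧
      (∃ n, Nrm L n q' ∧ ip n z = 1) := by
  obtain ⟨e, he, hv, -⟩ := exists_vis hL hz 0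
  obtain ⟨n, p, m, q, h1, h2, hpq, h3, h4⟩ := ct_pair hL hv he
  have hv2 := sub_vis hL h1.1 h2.1 h1.2.1 h2.2.1 hpq
  have he2 : p - q ≠ 0 := sub_ne_zero.mpr hpq
  obtain ⟨n', p', m', q', h1', h2', hpq', h3', h4'⟩ := ct_pair hL hv2 he2
  refine ⟨p, q, p', q', ?_, ⟨n, h1.1, h1.2.1⟩, ⟨m, h2.1, h2.2.1⟩, ⟨n', h1'.1, h1'.2.1⟩,
    ⟨m', h2'.1, h2'.2.1⟩⟩
  intro h0
  obtain ⟨t, ht⟩ := cr_eq_zero he2 h0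
  have a := h1'.2.2.2
  have b := h2'.2.2.2
  rw [cr_neg_right, ip_neg_left] at b
  have : ip (cr z (p - q)) (p' - q') = 0 := by rw [ht, ip_smul_right, ip_cr_right, mul_zero]
  rw [ip_sub_right] at this
  linarith

/-- A2 -/
theorem Setup.a2 {K L : Set E3} {ν : E3 → E3} {c : E3 → ℝ} (S : Setup K L ν c) {z a : E3} {d : ℝ}
    (hz : z ∈ frontier K) (h : ∀ n p, Nrm L n p → ip n z = 1 → ip a p = d) :
    ∃ t : ℝ, a = t • ν z ∧ d = t * c z := by
  obtain ⟨p, q, p', q', hcr, ⟨n1, h1, h1'⟩, ⟨n2, h2, h2'⟩, ⟨n3, h3, h3'⟩, ⟨n4, h4, h4'⟩⟩ :=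
    three_contacts S.lb (S.not_mem hz)
  obtain ⟨t, ht⟩ := parallel_of (a := a) (b := ν z) hcr (S.nu0 z hz)
    (by rw [ip_sub_right, h _ _ h1 h1', h _ _ h2 h2', sub_self])
    (by rw [ip_sub_right, h _ _ h3 h3', h _ _ h4 h4', sub_self])
    (by rw [ip_sub_right, S.pl hz h1 h1', S.pl hz h2 h2', sub_self])
    (by rw [ip_sub_right, S.pl hz h3 h3', S.pl hz h4 h4', sub_self])
  refine ⟨t, ht, ?_⟩
  rw [← h _ _ h1 h1', ← S.pl hz h1 h1', ht, ip_smul_left]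

/-- A3 -/
theorem Setup.a3 {K L : Set E3} {ν : E3 → E3} {c : E3 → ℝ} (S : Setup K L ν c) {z n p : E3}
    (hz : z ∈ frontier K) (h : Nrm L n p) (hn : ip n z = -1) : ip (ν z) p = - c z := by
  have := S.pl hz (nrm_neg S.lb h) (by rw [ip_neg_left, hn, neg_neg])
  rw [ip_neg_right] at this
  linarith

theorem contact_vis {L : Set E3} (hL : LB L) {x n p : E3} (hx : x ∉ L) (h : Nrm L n p)
    (hn : ip n x = 1) : ∃ e, e ≠ 0 ∧ Vis L x e ∧ Ct L x e n p := by
  have hpx : p - x ≠ 0 := by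
    intro h0; apply hx; rw [sub_eq_zero] at h0; rw [← h0]; exact h.1
  have e0 : cr n (p - x) ≠ 0 := by
    intro h0
    obtain ⟨t, ht⟩ := cr_eq_zero h.ne_zero h0
    have : ip n (p - x) = 0 := by rw [ip_sub_right, h.2.1, hn, sub_self]
    rw [ht, ip_smul_right] at this
    rcases mul_eq_zero.mp this with h1 | h1
    · rw [h1, zero_smul] at ht; exact hpx ht
    · exact (ip_self_pos h.ne_zero).ne' h1
  set e := cr n (p - x) with he
  have hne : ip n e = 0 := by rw [ip_comm, he, ip_cr_left]
  have hee : ip e (p - x) = 0 := by rw [he, ip_cr_right]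
  have hline : ∀ s : ℝ, p ≠ x + s • e := by
    intro s hs
    apply hpx
    apply ip_self_eq_zero
    have h1 : p - x = s • e := by rw [hs]; simp
    nth_rewrite 1 [h1]
    rw [ip_smul_left, hee, mul_zero]
  have hv : Vis L x e := by
    intro s hs
    apply hline s
    have := nrm_unique hL h hs (by simp [hn, hne])
    exact this.symm
  have hne0 : ip (cr x e) p ≠ 0 := by
    intro h0
    obtain ⟨s, t, hst⟩ := span2 (vis_cr hL hv e0) h0
    have h1 := h.2.1
    rw [hst] at h1
    simp [hn, hne] at h1
    rw [h1, one_smul] at hst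
    exact hline t hst
  rcases lt_or_gt_of_ne hne0 with h1 | h1
  · refine ⟨-e, neg_ne_zero.mpr e0, vis_neg hv, h, hn, by rw [ip_neg_right, hne, neg_zero], ?_⟩
    rw [cr_neg_right, ip_neg_left]; linarith
  · exact ⟨e, e0, hv, h, hn, hne, h1⟩

theorem ct_family {L : Set E3} (hL : LB L) {ι : Type*} {F : Filter ι} {x e : ι → E3}
    {x' e' n' p' : E3} (hx : Filter.Tendsto x F (nhds x')) (he : Filter.Tendsto e F (nhds e'))
    (he' : e' ≠ 0) (hv : Vis L x' e') (hc' : Ct L x' e' n' p') :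
    ∃ n p : ι → E3, (∀ᶠ i in F, Ct L (x i) (e i) (n i) (p i)) ∧
      Filter.Tendsto n F (nhds n') ∧ Filter.Tendsto p F (nhds p') := by
  have hch : ∀ i, ∃ n p, Vis L (x i) (e i) → e i ≠ 0 → Ct L (x i) (e i) n p := by
    intro i
    by_cases h : Vis L (x i) (e i) ∧ e i ≠ 0
    · obtain ⟨n, p, hc⟩ := ct_exists hL h.1 h.2
      exact ⟨n, p, fun _ _ => hc⟩
    · exact ⟨0, 0, fun h1 h2 => absurd ⟨h1, h2⟩ h⟩
  choose n p hnp using hch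
  have hev : ∀ᶠ i in F, Ct L (x i) (e i) (n i) (p i) := by
    filter_upwards [vis_open hL hx he he' hv, he.eventually_ne he'] with i h1 h2 using hnp i h1 h2
  exact ⟨n, p, hev, ct_tendsto hL hx he he' hv hc' hev⟩

/-- A4 -/
theorem Setup.a4 {K L : Set E3} {ν : E3 → E3} {c : E3 → ℝ} (S : Setup K L ν c) {ι : Type*}
    {F : Filter ι} {x a : ι → E3} {d : ι → ℝ} {x' a' n p : E3} (hx' : x' ∈ frontier K)
    (hx : Filter.Tendsto x F (nhds x')) (ha : Filter.Tendsto a F (nhds a'))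
    (h : ∀ᶠ i in F, ∀ n p, Nrm L n p → ip n (x i) = 1 → ip (a i) p = d i)
    (hn : Nrm L n p) (hnx : ip n x' = 1) : Filter.Tendsto d F (nhds (ip a' p)) := by
  obtain ⟨e, he, hv, hc⟩ := contact_vis S.lb (S.not_mem hx') hn hnx
  obtain ⟨m, q, hev, -, hq⟩ := ct_family S.lb hx (tendsto_const_nhds (x := e)) he hv hc
  apply (ha.ip hq).congr'
  filter_upwards [h, hev] with i h1 h2 using h1 _ _ h2.1 h2.2.1

theorem Setup.a4' {K L : Set E3} {ν : E3 → E3} {c : E3 → ℝ} (S : Setup K L ν c) {ι : Type*}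
    {F : Filter ι} [F.NeBot] {x a : ι → E3} {d : ι → ℝ} {x' a' : E3} (hx' : x' ∈ frontier K)
    (hx : Filter.Tendsto x F (nhds x')) (ha : Filter.Tendsto a F (nhds a'))
    (h : ∀ᶠ i in F, ∀ n p, Nrm L n p → ip n (x i) = 1 → ip (a i) p = d i) :
    ∃ t : ℝ, a' = t • ν x' ∧ Filter.Tendsto d F (nhds (t * c x')) := by
  obtain ⟨p, -, -, -, -, ⟨n, h1, h2⟩, -⟩ := three_contacts S.lb (S.not_mem hx')
  have hd := S.a4 hx' hx ha h h1 h2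
  obtain ⟨t, ht, htc⟩ := S.a2 (a := a') (d := ip a' p) hx' (fun m q g1 g2 =>
    tendsto_nhds_unique (S.a4 hx' hx ha h g1 g2) hd)
  exact ⟨t, ht, htc ▸ hd⟩

theorem line_lemma {L : Set E3} (hL : LB L) {p q r n m k : E3} {t : ℝ} (h1 : Nrm L n p)
    (h2 : Nrm L m q) (h3 : Nrm L k r) (hpq : p ≠ q) (hr : r = p + t • (q - p)) :
    r = p ∨ r = q := by
  have a1 := nrm_lt hL h1 h2.1 hpq.symm
  have a2 := nrm_lt hL h2 h1.1 hpq
  have b1 := h1.2.2 _ h3.1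
  have b2 := h2.2.2 _ h3.1
  have b3 := h3.2.1
  have c1 := h3.2.2 _ h1.1
  have c2 := h3.2.2 _ h2.1
  have d1 := h1.2.1
  have d2 := h2.2.1
  rw [hr] at b1 b2 b3
  simp only [ip_add_right, ip_smul_right, ip_sub_right] at b1 b2 b3
  by_cases t0 : t = 0
  · left; rw [hr, t0]; simp
  by_cases t1 : t = 1
  · right; rw [hr, t1]; simp
  have t2 : 0 < t := by
    rcases lt_or_gt_of_ne t0 with h | h
    · nlinarith
    · exact h
  have t3 : t < 1 := by
    rcases lt_or_gt_of_ne t1 with h | h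
    · exact h
    · nlinarith
  left
  symm
  apply nrm_unique hL h3 h1.1
  nlinarith

/-- Lemma G -/
theorem Setup.lemG {K L : Set E3} {ν : E3 → E3} {c : E3 → ℝ} (S : Setup K L ν c) {x y p n : E3}
    (hx : x ∈ frontier K) (hy : y ∈ frontier K) (hxy : x ≠ y) (hv : Vis L x (y - x))
    (hn : Nrm L n p) (px : ip (ν x) p = c x) (py : ip (ν y) p = c y)
    (hno : ∀ m, Nrm L m p → ip m x = 1 → ip m y = 1 → False) : Same ν c x y := by
  obtain ⟨n1, p1, n2, p2, h1, h2, h12, -, -⟩ := ct_pair S.lb hv (sub_ne_zero.mpr hxy.symm)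
  have y1 : ip n1 y = 1 := by
    have a := h1.2.2.1
    rw [ip_sub_right, h1.2.1] at a
    linarith
  have y2 : ip n2 y = 1 := by
    have a := h2.2.2.1
    rw [ip_neg_right, ip_sub_right, h2.2.1] at a
    linarith
  have hp1 : p ≠ p1 := by rintro rfl; exact hno _ h1.1 h1.2.1 y1
  have hp2 : p ≠ p2 := by rintro rfl; exact hno _ h2.1 h2.2.1 y2
  have hcr : cr (p2 - p1) (p - p1) ≠ 0 := by
    intro h0
    obtain ⟨t, ht⟩ := cr_eq_zero (sub_ne_zero.mpr h12.symm) h0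
    rcases line_lemma S.lb h1.1 h2.1 hn h12 (t := t) (by rw [← ht]; simp) with h | h
    · exact hp1 h
    · exact hp2 h
  have q1 := S.pl hx h1.1 h1.2.1
  have q2 := S.pl hx h2.1 h2.2.1
  have q3 := S.pl hy h1.1 y1
  have q4 := S.pl hy h2.1 y2
  obtain ⟨t, ht⟩ := parallel_of (a := ν y) (b := ν x) hcr (S.nu0 x hx)
    (by rw [ip_sub_right, q3, q4, sub_self]) (by rw [ip_sub_right, q3, py, sub_self])
    (by rw [ip_sub_right, q1, q2, sub_self]) (by rw [ip_sub_right, q1, px, sub_self])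
  refine ⟨t, ?_, ht, ?_⟩
  · rintro rfl
    rw [zero_smul] at ht
    exact S.nu0 y hy ht
  · rw [← px, ← py, ht, ip_smul_left]

/-- close points -/
theorem Setup.vis_close {K L : Set E3} {ν : E3 → E3} {c : E3 → ℝ} (S : Setup K L ν c) :
    ∃ δ > 0, ∀ x ∈ frontier K, ∀ y ∈ frontier K, dist x y < δ → Vis L x (y - x) := by
  obtain ⟨δ, hδ, hsub⟩ := S.lb.comp.exists_thickening_subset_open isOpen_interior S.lk
  refine ⟨δ, hδ, fun x hx y hy hd s hs => ?_⟩
  set l := x + s • (y - x) with hl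
  have far : ∀ w ∈ frontier K, ¬ dist w l < δ := by
    intro w hw h
    exact hw.2 (hsub (mem_thickening_iff.mpr ⟨l, hs, h⟩))
  have hli := S.lk hs
  by_cases s0 : s < 0
  · have : x ∈ openSegment ℝ l y := by
      refine ⟨1 / (1 - s), - s / (1 - s), by apply div_pos <;> linarith,
        by apply div_pos <;> linarith, ?_, ?_⟩
      · have : 1 - s ≠ 0 := by linarith
        field_simp; ring
      · have : 1 - s ≠ 0 := by linarith
        rw [hl]
        match_scalars <;> field_simp <;> ring
    exact hx.2 (S.kconv.openSegment_interior_closure_subset_interior hli hy.1 this)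
  by_cases s1 : 1 < s
  · have : y ∈ openSegment ℝ l x := by
      refine ⟨1 / s, (s - 1) / s, by apply div_pos <;> linarith,
        by apply div_pos <;> linarith, ?_, ?_⟩
      · have : s ≠ 0 := by linarith
        field_simp; ring
      · have : s ≠ 0 := by linarith
        rw [hl]
        match_scalars <;> field_simp <;> ring
    exact hy.2 (S.kconv.openSegment_interior_closure_subset_interior hli hx.1 this)
  · apply far x hx
    rw [dist_comm, dist_eq_norm] at hd
    rw [dist_comm, dist_eq_norm, hl]
    have : x + s • (y - x) - x = s • (y - x) := by abel
    rw [this, norm_smul, Real.norm_eq_abs, abs_of_nonneg (by linarith)]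
    nlinarith [norm_nonneg (y - x)]

/-! ### Smoothness of `L` -/

theorem Setup.ray {K L : Set E3} {ν : E3 → E3} {c : E3 → ℝ} (S : Setup K L ν c) {p : E3}
    (hp : p ∈ L) : ∃ γ : E3 → ℝ, (∀ d, d ≠ 0 → 0 < γ d ∧ p + γ d • d ∈ frontier K ∧
      ContinuousAt γ d) := by
  set K' : Set E3 := (fun x => p + x) ⁻¹' K with hK'
  have hconv : Convex ℝ K' := S.kconv.translate_preimage_right p
  have h0 : K' ∈ nhds (0 : E3) := by
    have hc : Continuous (fun x : E3 => p + x) := by fun_prop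
    apply hc.continuousAt.preimage_mem_nhds
    simpa using mem_interior_iff_mem_nhds.mp (S.lk hp)
  have hfr : ∀ x, x ∈ frontier K' ↔ p + x ∈ frontier K := by
    intro x
    have := (Homeomorph.addLeft p).preimage_frontier K
    have h2 : x ∈ (Homeomorph.addLeft p) ⁻¹' frontier K ↔ p + x ∈ frontier K := by simp
    rw [← h2, this]; rfl
  have hb : Bornology.IsBounded K' := by
    have : K' = (fun x => -p + x) '' K := by
      ext x; simp [hK']
    rw [this]
    exact (S.kcomp.image (by fun_prop)).isBounded
  have hpos : ∀ d, d ≠ 0 → 0 < gauge K' d := fun d hd => (gauge_pos (absorbent_nhds_zero h0)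
    (NormedSpace.isVonNBounded_of_isBounded ℝ hb)).mpr hd
  refine ⟨fun d => (gauge K' d)⁻¹, fun d hd => ⟨inv_pos.mpr (hpos d hd), ?_, ?_⟩⟩
  · rw [← hfr, ← gauge_eq_one_iff_mem_frontier hconv h0,
      gauge_smul_of_nonneg (inv_nonneg.mpr (hpos d hd).le), smul_eq_mul,
      inv_mul_cancel₀ (hpos d hd).ne']
  · exact (continuous_gauge hconv h0).continuousAt.inv₀ (hpos d hd).ne'

theorem nrm_combo {L : Set E3} {n m p : E3} (h1 : Nrm L n p) (h2 : Nrm L m p) {a b : ℝ} (ha : 0 ≤ a)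
    (hb : 0 ≤ b) (hab : a + b = 1) : Nrm L (a • n + b • m) p := by
  refine ⟨h1.1, by simp [h1.2.1, h2.2.1, hab], fun l hl => ?_⟩
  have := h1.2.2 l hl
  have := h2.2.2 l hl
  simp
  nlinarith

theorem Setup.smooth {K L : Set E3} {ν : E3 → E3} {c : E3 → ℝ} (S : Setup K L ν c) {n1 n2 p : E3}
    (h1 : Nrm L n1 p) (h2 : Nrm L n2 p) : n1 = n2 := by
  by_contra hne
  obtain ⟨r, hr, hball_sub⟩ := S.lb.ball
  obtain ⟨δ, hδ, hvis⟩ := S.vis_close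
  obtain ⟨γ, hγ⟩ := S.ray h1.1
  set C : Set E3 := {d | 0 < ip n1 d ∧ ip n2 d < 0} with hC
  have hCo : IsOpen C :=
    (isOpen_lt continuous_const (cont_ip n1)).inter (isOpen_lt (cont_ip n2) continuous_const)
  have hCc : Convex ℝ C := by
    intro x hx y hy a b ha hb hab
    obtain ⟨x1, x2⟩ := hx
    obtain ⟨y1, y2⟩ := hy
    have : 0 < a ∨ 0 < b := by
      by_contra h; push Not at h; linarith
    constructor
    · simp
      rcases this with h | h <;> nlinarith [mul_nonneg ha x1.le, mul_nonneg hb y1.le]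
    · simp
      rcases this with h | h <;> nlinarith [mul_nonneg ha (neg_nonneg.mpr x2.le), mul_nonneg hb (neg_nonneg.mpr y2.le)]
  have hC0 : ∀ d ∈ C, d ≠ 0 := by
    rintro d hd rfl
    have := hd.1
    simp at this
  obtain ⟨d0, hd0⟩ : ∃ d, d ∈ C := by
    have hp := ip_self_pos (sub_ne_zero.mpr hne)
    refine ⟨(n1 - n2) + (-(ip n1 (n1 - n2) + ip n2 (n1 - n2)) / 2) • p, ?_, ?_⟩
    · have a1 := h1.2.1
      rw [ip_add_right, ip_smul_right, a1]
      rw [ip_sub_left] at hp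
      linarith
    · have a1 := h2.2.1
      rw [ip_add_right, ip_smul_right, a1]
      rw [ip_sub_left] at hp
      linarith
  set X : E3 → E3 := fun d => p + γ d • d with hX
  have hXB : ∀ d, d ≠ 0 → X d ∈ frontier K := fun d hd => (hγ d hd).2.1
  have hXc : ∀ d, d ≠ 0 → ContinuousAt X d := fun d hd =>
    continuousAt_const.add ((hγ d hd).2.2.smul continuousAt_id)
  have hcon : ∀ d ∈ C, ∃ n, Nrm L n p ∧ ip n d = 0 := by
    intro d hd
    obtain ⟨u1, u2⟩ := hd
    have hs : 0 < ip n1 d - ip n2 d := by linarith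
    refine ⟨(-ip n2 d / (ip n1 d - ip n2 d)) • n1 + (ip n1 d / (ip n1 d - ip n2 d)) • n2,
      nrm_combo h1 h2 (div_nonneg (by linarith) hs.le) (div_nonneg u1.le hs.le) ?_, ?_⟩
    · rw [← add_div]; rw [div_eq_one_iff_eq hs.ne']; ring
    · simp; ring
  have hpl : ∀ d ∈ C, ip (ν (X d)) p = c (X d) := by
    intro d hd
    obtain ⟨n, hn, hnd⟩ := hcon d hd
    exact S.pl (hXB d (hC0 d hd)) hn (by simp [hX, hn.2.1, hnd])
  have hloc : ∀ d ∈ C, ∀ᶠ d' in nhdsWithin d C, Same ν c (X d) (X d') := by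
    intro d hd
    have hd' := hC0 d hd
    have hlim : Filter.Tendsto (fun ε : ℝ => d + ε • p) (nhdsWithin 0 (Ioi 0)) (nhds d) := by
      have : Filter.Tendsto (fun ε : ℝ => d + ε • p) (nhds 0) (nhds (d + (0:ℝ) • p)) := by
        apply Continuous.tendsto; fun_prop
      rw [zero_smul, add_zero] at this
      exact this.mono_left nhdsWithin_le_nhds
    have hball : ∀ᶠ d' in nhds d, dist (X d') (X d) < δ / 2 :=
      (hXc d hd').eventually (Metric.ball_mem_nhds _ (by linarith))
    have hCev : ∀ᶠ x in nhds d, x ∈ C := hCo.mem_nhds hd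
    obtain ⟨ε, ⟨hε1, hε2⟩, hε0⟩ := ((hlim.eventually (hCev.and
      hball)).and self_mem_nhdsWithin).exists
    have hε0 : 0 < ε := hε0
    have key : ∀ d' ∈ C, dist (X d') (X d) < δ / 2 → dist d' d < r * ε →
        Same ν c (X d') (X (d + ε • p)) := by
      intro d' hd'C hdist hdd
      have e1 := hXB d' (hC0 d' hd'C)
      have e2 := hXB _ (hC0 _ hε1)
      have hno : ∀ m, Nrm L m p → ip m d' = 0 → ip m (d + ε • p) = 0 → False := by
        intro m hm m1 m2
        have hli : (1 / ε) • (d' - d) ∈ interior L := by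
          apply interior_mono hball_sub
          rw [interior_closedBall _ hr.ne', mem_ball_zero_iff, norm_smul, Real.norm_eq_abs,
            abs_of_pos (by positivity), ← dist_eq_norm, div_mul_eq_mul_div, one_mul,
            div_lt_iff₀ hε0]
          exact hdd
        have := int_lt hm.2.2 hm.ne_zero hli
        rw [ip_add_right, ip_smul_right, hm.2.1] at m2
        rw [ip_smul_right, ip_sub_right, m1, div_mul_eq_mul_div, div_lt_one hε0] at this
        linarith
      have hX1 : ∀ m d, Nrm L m p → d ≠ 0 → ip m (X d) = 1 → ip m d = 0 := by
        intro m d hm hd h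
        simp only [hX, ip_add_right, ip_smul_right, hm.2.1] at h
        have := (hγ d hd).1
        have h' : γ d * ip m d = 0 := by linarith
        rcases mul_eq_zero.mp h' with h3 | h3
        · linarith
        · exact h3
      have hno' : ∀ m, Nrm L m p → ip m (X d') = 1 → ip m (X (d + ε • p)) = 1 → False :=
        fun m hm m1 m2 => hno m hm (hX1 m d' hm (hC0 _ hd'C) m1) (hX1 m _ hm (hC0 _ hε1) m2)
      apply S.lemG e1 e2 _ _ h1 (hpl d' hd'C) (hpl _ hε1) hno'
      · intro heq
        obtain ⟨m, hm, hm0⟩ := hcon d' hd'C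
        have h3 : ip m (X d') = 1 := by simp [hX, hm.2.1, hm0]
        exact hno' m hm h3 (heq ▸ h3)
      · apply hvis _ e1 _ e2
        calc dist (X d') (X (d + ε • p)) ≤ dist (X d') (X d) + dist (X (d + ε • p)) (X d) :=
              dist_triangle_right _ _ _
          _ < δ := by linarith
    have hs := key d hd (by rw [dist_self]; linarith) (by rw [dist_self]; positivity)
    filter_upwards [self_mem_nhdsWithin, nhdsWithin_le_nhds hball,
      nhdsWithin_le_nhds (Metric.ball_mem_nhds d (by positivity : 0 < r * ε))] with d' g1 g2 g3
    exact hs.trans (key d' g1 g2 g3).symm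
  have hall : ∀ d ∈ C, Same ν c (X d0) (X d) := fun d hd =>
    hCc.isPreconnected.induction₂ (fun x y => Same ν c (X x) (X y)) hloc
      (fun _ _ _ _ _ _ => Same.trans) (fun _ _ _ _ => Same.symm) hd0 hd
  obtain ⟨g, hg, g1, g2⟩ : ∃ g, g ≠ 0 ∧ ip (ν (X d0)) g = 0 ∧ 0 ≤ ip n1 g ∧ ip n2 g ≤ 0 := by
    obtain ⟨g, hg, g1, g2⟩ := exists_perp2 (ν (X d0)) (n1 + n2)
    rw [ip_add_left] at g2
    rcases le_total 0 (ip n1 g) with h | h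
    · exact ⟨g, hg, g1, h, by linarith⟩
    · refine ⟨-g, neg_ne_zero.mpr hg, by rw [ip_neg_right, g1, neg_zero], ?_, ?_⟩ <;>
        rw [ip_neg_right] <;> linarith
  have hlim : Filter.Tendsto (fun ε : ℝ => g + ε • d0) (nhdsWithin 0 (Ioi 0)) (nhds g) := by
    have : Filter.Tendsto (fun ε : ℝ => g + ε • d0) (nhds 0) (nhds (g + (0:ℝ) • d0)) := by
      apply Continuous.tendsto; fun_prop
    rw [zero_smul, add_zero] at this
    exact this.mono_left nhdsWithin_le_nhds
  obtain ⟨t, ht, htc⟩ := S.a4' (a := fun _ => ν (X d0)) (d := fun _ => c (X d0)) (hXB g hg)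
    ((hXc g hg).tendsto.comp hlim) tendsto_const_nhds (by
      filter_upwards [self_mem_nhdsWithin] with ε hε
      intro n q hn hnq
      have hε : 0 < ε := hε
      have hmem : g + ε • d0 ∈ C := by
        constructor
        · simp; nlinarith [hd0.1, mul_pos hε hd0.1]
        · simp; nlinarith [hd0.2, mul_pos hε (neg_pos.mpr hd0.2)]
      obtain ⟨s, hs, s1, s2⟩ := hall _ hmem
      have := S.pl (hXB _ (hC0 _ hmem)) hn hnq
      rw [s1, s2, ip_smul_left] at this
      exact mul_left_cancel₀ hs this)
  have htc' : c (X d0) = t * c (X g) := tendsto_nhds_unique tendsto_const_nhds htc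
  have hfin : ip (ν (X d0)) (X g) = c (X d0) := by
    rw [← hpl d0 hd0]
    change ip (ν (X d0)) (p + γ g • g) = _
    rw [ip_add_right, ip_smul_right, g1, mul_zero, add_zero]
  have ht0 : t ≠ 0 := by
    rintro rfl
    rw [zero_smul] at ht
    exact S.nu0 _ (hXB d0 (hC0 d0 hd0)) ht
  apply S.a1 (hXB g hg)
  rw [htc', ht, ip_smul_left] at hfin
  exact mul_left_cancel₀ ht0 hfin

/-! ### Planar lemma, `c ≠ 0`, non-constancy -/

theorem cr_contacts {L : Set E3} (hL : LB L) {w n p m q : E3} (hw : w ∉ L) (h1 : Nrm L n p)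
    (h2 : Nrm L m q) (w1 : ip n w = 1) (hpq : p ≠ q) :
    cr (p - w) (q - w) ≠ 0 := by
  intro h0
  have hpw : p - w ≠ 0 := by
    intro h; rw [sub_eq_zero] at h; exact hw (h ▸ h1.1)
  obtain ⟨t, ht⟩ := cr_eq_zero hpw h0
  have : ip n (q - w) = 0 := by rw [ht, ip_smul_right, ip_sub_right, h1.2.1, w1]; ring
  rw [ip_sub_right, w1] at this
  exact hpq (nrm_unique hL h1 h2.1 (by linarith)).symm

theorem lemma2D {L : Set E3} (hL : LB L) {w n p m q k r : E3} (hw : w ∉ L) (h1 : Nrm L n p)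
    (h2 : Nrm L m q) (h3 : Nrm L k r) (w1 : ip n w = 1) (w2 : ip m w = 1) (w3 : ip k w = 1)
    (hpq : p ≠ q) (h : ip (cr (p - w) (q - w)) (r - w) = 0) : r = p ∨ r = q := by
  obtain ⟨α, β, hr⟩ := span2 (cr_contacts hL hw h1 h2 w1 hpq) h
  have a1 := nrm_lt hL h1 h2.1 hpq.symm
  have a2 := nrm_lt hL h2 h1.1 hpq
  have e1 : ip n (r - w) = β * (ip n q - 1) := by
    rw [hr]; simp [h1.2.1, w1]
  have e2 : ip m (r - w) = α * (ip m p - 1) := by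
    rw [hr]; simp [h2.2.1, w2]
  have e3 : ip k (r - w) = α * (ip k p - 1) + β * (ip k q - 1) := by
    rw [hr]; simp [w3]
  rw [ip_sub_right] at e1 e2 e3
  have b1 := h1.2.2 _ h3.1
  have b2 := h2.2.2 _ h3.1
  rw [w1] at e1
  rw [w2] at e2
  rw [w3, h3.2.1] at e3
  have hβ : 0 ≤ β := by nlinarith
  have hα : 0 ≤ α := by nlinarith
  by_contra hc
  push Not at hc
  have c1 := nrm_lt hL h3 h1.1 hc.1.symm
  have c2 := nrm_lt hL h3 h2.1 hc.2.symm
  have hα0 : α = 0 := by nlinarith [mul_nonneg hα (sub_nonneg.mpr c1.le), mul_nonneg hβ (sub_nonneg.mpr c2.le)]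
  have hβ0 : β = 0 := by nlinarith [mul_nonneg hα (sub_nonneg.mpr c1.le), mul_nonneg hβ (sub_nonneg.mpr c2.le)]
  rw [hα0, hβ0] at hr
  simp only [zero_smul, add_zero] at hr
  rw [sub_eq_zero] at hr
  exact hw (hr ▸ h3.1)

theorem lemma2Da {L : Set E3} (hL : LB L) {a w n p m q k r : E3} (ha : a ≠ 0) (hw : w ∉ L)
    (h1 : Nrm L n p) (h2 : Nrm L m q) (h3 : Nrm L k r) (w1 : ip n w = 1) (w2 : ip m w = 1)
    (w3 : ip k w = 1) (hpq : p ≠ q) (a1 : ip a p = ip a w) (a2 : ip a q = ip a w)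
    (a3 : ip a r = ip a w) : r = p ∨ r = q := by
  apply lemma2D hL hw h1 h2 h3 w1 w2 w3 hpq
  obtain ⟨t, ht⟩ := cr_span (a := a) (cr_contacts hL hw h1 h2 w1 hpq)
    (by rw [ip_sub_right, a1, sub_self]) (by rw [ip_sub_right, a2, sub_self])
  have ht0 : t ≠ 0 := by rintro rfl; rw [zero_smul] at ht; exact ha ht
  have : ip a (r - w) = 0 := by rw [ip_sub_right, a3, sub_self]
  rw [ht, ip_smul_left] at this
  exact (mul_eq_zero.mp this).resolve_left ht0

theorem Setup.exists_w {K L : Set E3} {ν : E3 → E3} {c : E3 → ℝ} (S : Setup K L ν c) (a : E3) :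
    ∃ w ∈ frontier K, ip a w = 0 := by
  obtain ⟨g, hg, h1, -⟩ := exists_perp2 a a
  exact ⟨pr K g, S.pr_mem hg, by rw [pr, ip_smul_right, h1, mul_zero]⟩

/-- the two contacts of `z`, `w` -/
theorem Setup.pair {K L : Set E3} {ν : E3 → E3} {c : E3 → ℝ} (S : Setup K L ν c) {z w : E3}
    (hz : z ∈ frontier K) (hw : w ∈ frontier K) (h : ip (ν z) w = 0) :
    ∃ n p m q, Nrm L n p ∧ Nrm L m q ∧ ip n z = 1 ∧ ip n w = 1 ∧ ip m z = 1 ∧ ip m w = 1 ∧ p ≠ q := by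
  have hv := S.af z hz w hw h
  have hne : w - z ≠ 0 := by
    intro h0
    rw [sub_eq_zero] at h0
    rw [h0] at h
    exact S.a0 hz h
  obtain ⟨n, p, m, q, h1, h2, hpq, -, -⟩ := ct_pair S.lb hv hne
  refine ⟨n, p, m, q, h1.1, h2.1, h1.2.1, ?_, h2.2.1, ?_, hpq⟩
  · have a := h1.2.2.1
    rw [ip_sub_right, h1.2.1] at a
    linarith
  · have a := h2.2.2.1
    rw [ip_neg_right, ip_sub_right, h2.2.1] at a
    linarith

theorem Setup.cne {K L : Set E3} {ν : E3 → E3} {c : E3 → ℝ} (S : Setup K L ν c) {z : E3}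
    (hz : z ∈ frontier K) : c z ≠ 0 := by
  intro hc
  obtain ⟨w, hw, hνw⟩ := S.exists_w (ν z)
  obtain ⟨n, p, m, q, h1, h2, nz, nw, mz, mw, hpq⟩ := S.pair hz hw hνw
  obtain ⟨n', p', -, -, h1', -, nz', nw', -⟩ := S.pair hz (S.neg_mem hw)
    (by rw [ip_neg_right, hνw, neg_zero])
  rw [ip_neg_right] at nw'
  have h3 := nrm_neg S.lb h1'
  have r1 := S.pl hz h1 nz
  have r2 := S.pl hz h2 mz
  have r3 := S.pl hz h1' nz'
  have := lemma2Da S.lb (S.nu0 z hz) (S.not_mem hw) h1 h2 h3 nw mw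
    (by rw [ip_neg_left]; linarith) hpq (by rw [r1, hνw, hc]) (by rw [r2, hνw, hc])
    (by rw [ip_neg_right, r3, hνw, hc, neg_zero])
  rcases this with h | h
  · rw [h] at h3
    have := S.smooth h1 h3
    rw [this, ip_neg_left, nz'] at nz
    linarith
  · rw [h] at h3
    have := S.smooth h2 h3
    rw [this, ip_neg_left, nz'] at mz
    linarith

theorem Setup.nonconst {K L : Set E3} {ν : E3 → E3} {c : E3 → ℝ} (S : Setup K L ν c) {z : E3}
    (hz : z ∈ frontier K) : ¬ ∀ᶠ y in nhdsWithin z (frontier K), Same ν c z y := by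
  intro hsame
  have claim : ∀ w ∈ frontier K, ip (ν z) w = 0 →
      ∀ᶠ ε in nhds (0 : ℝ), gauge K (z + ε • w) = 1 + ε := by
    intro w hw hνw
    have hzn := S.ne_zero hz
    obtain ⟨n, p, m, q, h1, h2, nz, nw, mz, mw, hpq⟩ := S.pair hz hw hνw
    have hz0 := S.a0 hz
    set κ := c z / ip (ν z) z with hκ
    have hκ1 : κ ≠ 1 := by
      rw [hκ, Ne, div_eq_one_iff_eq hz0]
      exact fun h => S.a1 hz h.symm
    have hv : Vis L z (w - z) := S.af z hz w hw hνw
    set e0 := z + (1 - κ) • (w - z) with he0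
    have e0L : e0 ∉ L := hv _
    have e0ν : ip (ν z) e0 = c z := by
      simp [he0, hνw]
      rw [hκ]; field_simp; ring
    have hwz : w - z ≠ 0 := by
      intro h0
      rw [sub_eq_zero] at h0
      rw [h0] at hνw
      exact S.a0 hz hνw
    have lim1 : Filter.Tendsto (fun ε : ℝ => z + ε • w) (nhds 0) (nhds z) := by
      have : Filter.Tendsto (fun ε : ℝ => z + ε • w) (nhds 0) (nhds (z + (0:ℝ) • w)) := by
        apply Continuous.tendsto; fun_prop
      rwa [zero_smul, add_zero] at this
    have lim2 : Filter.Tendsto (fun ε : ℝ => pr K (z + ε • w)) (nhds 0) (nhds z) := by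
      have := S.pr_tendsto hzn lim1
      rwa [S.pr_self hz] at this
    have ev0 := lim1.eventually_ne hzn
    have lim3 : Filter.Tendsto (fun ε : ℝ => pr K (z + ε • w)) (nhds 0)
        (nhdsWithin z (frontier K)) :=
      tendsto_nhdsWithin_iff.mpr ⟨lim2, ev0.mono fun ε h => S.pr_mem h⟩
    have hez : e0 - z ≠ 0 := by
      rw [he0]
      simp only [add_sub_cancel_left]
      exact smul_ne_zero (sub_ne_zero.mpr hκ1.symm) hwz
    have hve : Vis L z (e0 - z) := by
      rw [he0]
      simp only [add_sub_cancel_left]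
      exact vis_smul hv _
    have lim4 : Filter.Tendsto (fun ε : ℝ => e0 - pr K (z + ε • w)) (nhds 0) (nhds (e0 - z)) :=
      tendsto_const_nhds.sub lim2
    have ev1 := vis_open S.lb lim2 lim4 hez hve
    have ev2 := lim4.eventually_ne hez
    filter_upwards [ev0, ev1, ev2, lim3.eventually hsame] with ε g0 g1 g2 g3
    obtain ⟨n1, p1, hc1⟩ := ct_exists S.lb g1 g2
    have hy := S.pr_mem g0
    have ny := hc1.2.1
    have ne0 : ip n1 e0 = 1 := by
      have a := hc1.2.2.1
      rw [ip_sub_right, ny] at a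
      linarith
    obtain ⟨t, ht, t1, t2⟩ := g3
    have pl := S.pl hy hc1.1 ny
    rw [t1, t2, ip_smul_left] at pl
    have pl' := mul_left_cancel₀ ht pl
    have fin : ∀ n', ip n' z = 1 → ip n' w = 1 → n1 = n' → gauge K (z + ε • w) = 1 + ε := by
      rintro n' u1 u2 rfl
      rw [pr, ip_smul_right, ip_add_right, ip_smul_right, u1, u2,
        inv_mul_eq_one₀ (S.gpos g0).ne'] at ny
      rw [ny]; ring
    have E1 : ip n e0 = 1 := by simp [he0, nz, nw]
    have E2 : ip m e0 = 1 := by simp [he0, mz, mw]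
    rcases lemma2Da S.lb (S.nu0 z hz) e0L h1 h2 hc1.1 E1 E2 ne0 hpq
      (by rw [S.pl hz h1 nz, e0ν]) (by rw [S.pl hz h2 mz, e0ν]) (by rw [pl', e0ν]) with h | h
    · exact fin n nz nw (S.smooth (h ▸ hc1.1) h1)
    · exact fin m mz mw (S.smooth (h ▸ hc1.1) h2)
  obtain ⟨w, hw, hνw⟩ := S.exists_w (ν z)
  have h1 := claim w hw hνw
  have h2 := claim (-w) (S.neg_mem hw) (by rw [ip_neg_right, hνw, neg_zero])
  have hneg : Filter.Tendsto (fun ε : ℝ => -ε) (nhds 0) (nhds 0) := by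
    have := (continuous_neg (G := ℝ)).tendsto 0
    rwa [neg_zero] at this
  have h3 := hneg.eventually h2
  have h4 : ∀ᶠ ε in nhdsWithin (0:ℝ) {0}ᶜ, False := by
    filter_upwards [nhdsWithin_le_nhds h1, nhdsWithin_le_nhds h3, self_mem_nhdsWithin] with ε g1 g2 g3
    rw [smul_neg, neg_smul, neg_neg, g1] at g2
    exact g3 (by simp only [mem_singleton_iff]; linarith)
  exact h4.exists.choose_spec

/-! ### Support functionals and smooth points of `K` -/

theorem Setup.supp {K L : Set E3} {ν : E3 → E3} {c : E3 → ℝ} (S : Setup K L ν c) {z : E3}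
    (hz : z ∈ frontier K) : ∃ k, Nrm K k z := by
  obtain ⟨f, hf⟩ := geometric_hahn_banach_open_point S.kconv.interior isOpen_interior hz.2
  obtain ⟨n, hn⟩ := dual_rep f
  have h0 := hf 0 (S.lk S.lb.zero_mem)
  rw [map_zero, hn] at h0
  have hcl : K ⊆ closure (interior K) := by
    have := S.kconv.closure_interior_eq_closure_of_nonempty_interior ⟨0, S.lk S.lb.zero_mem⟩
    rw [this]; exact subset_closure
  have hle : ∀ x ∈ K, ip n x ≤ ip n z := by
    intro x hx
    have : closure (interior K) ⊆ {x | ip n x ≤ ip n z} :=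
      closure_minimal (fun y hy => by have := hf y hy; rw [hn, hn] at this; exact this.le)
        (isClosed_le (cont_ip n) continuous_const)
    exact this (hcl hx)
  refine ⟨(ip n z)⁻¹ • n, S.kcomp.isClosed.frontier_subset hz, ?_, ?_⟩
  · rw [ip_smul_left, inv_mul_cancel₀ h0.ne']
  · intro x hx
    rw [ip_smul_left, inv_mul_le_iff₀ h0, mul_one]
    exact hle x hx

theorem supp_bound {L : Set E3} (hL : LB L) : ∃ R, ∀ n, (∀ l ∈ L, ip n l ≤ 1) → ‖n‖ ≤ R := by
  obtain ⟨r, hr, hb⟩ := hL.ball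
  refine ⟨1 / r, fun n h => ?_⟩
  by_cases h0 : n = 0
  · rw [h0, norm_zero]; positivity
  have hn : 0 < ‖n‖ := norm_pos_iff.mpr h0
  have hm : (r / ‖n‖) • n ∈ L := by
    apply hb
    simp only [mem_closedBall, dist_zero_right, norm_smul, Real.norm_eq_abs]
    rw [abs_of_pos (by positivity), div_mul_cancel₀ _ hn.ne']
  have := h _ hm
  rw [ip_smul_right, ip_self] at this
  rw [le_div_iff₀ hr]
  have h2 : r / ‖n‖ * ‖n‖ ^ 2 = ‖n‖ * r := by field_simp
  linarith

/-- smooth boundary points -/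
def SmoothPt (K : Set E3) (z k : E3) : Prop :=
  z ∈ frontier K ∧ Nrm K k z ∧ ∀ k', Nrm K k' z → k' = k

theorem Setup.dense_smooth {K L : Set E3} {ν : E3 → E3} {c : E3 → ℝ} (S : Setup K L ν c) {z : E3}
    (hz : z ∈ frontier K) {ε : ℝ} (hε : 0 < ε) : ∃ z' k, SmoothPt K z' k ∧ dist z' z < ε := by
  have hzn : 0 < ‖z‖ := norm_pos_iff.mpr (S.ne_zero hz)
  obtain ⟨t, ht0, ht1, ht2⟩ : ∃ t : ℝ, 0 < t ∧ t < 1 ∧ 2 * (t * ‖z‖) < ε := by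
    refine ⟨min (1/2) (ε / (4 * ‖z‖)), by positivity, ?_, ?_⟩
    · exact (min_le_left _ _).trans_lt (by norm_num)
    · have : min (1/2) (ε / (4 * ‖z‖)) ≤ ε / (4 * ‖z‖) := min_le_right _ _
      rw [le_div_iff₀ (by positivity)] at this
      linarith
  set a := (1 - t) • z with ha
  have haK : a ∈ interior K := by
    have : a ∈ openSegment ℝ 0 z := ⟨t, 1 - t, ht0, by linarith, by ring, by simp [ha]⟩
    exact S.kconv.openSegment_interior_closure_subset_interior (S.lk S.lb.zero_mem) hz.1 this
  have hfc : IsCompact (frontier K) :=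
    S.kcomp.of_isClosed_subset isClosed_frontier S.kcomp.isClosed.frontier_subset
  obtain ⟨z', hz', hmin⟩ := hfc.exists_isMinOn ⟨z, hz⟩
    (continuous_const.dist continuous_id : Continuous fun x => dist a x).continuousOn
  have hmin' : ∀ x ∈ frontier K, dist a z' ≤ dist a x := fun x hx => hmin hx
  set ρ := dist a z' with hρ
  have haz : dist a z = t * ‖z‖ := by
    rw [dist_eq_norm, ha]
    have : (1 - t) • z - z = (-t) • z := by module
    rw [this, norm_smul, Real.norm_eq_abs, abs_neg, abs_of_pos ht0]
  have hρ0 : 0 < ρ := by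
    rw [hρ, dist_pos]
    intro h
    exact hz'.2 (h ▸ haK)
  have hball : ball a ρ ⊆ K := by
    intro x hx
    by_contra hxK
    obtain ⟨y, hy1, hy2, hy3⟩ := (convex_ball a ρ).isPreconnected (interior K) Kᶜ isOpen_interior
      S.kcomp.isClosed.isOpen_compl (by
        intro y hy
        by_contra hc
        rw [mem_union, not_or, notMem_compl_iff] at hc
        have h1 := hmin' y ⟨subset_closure hc.2, hc.1⟩
        rw [mem_ball, dist_comm] at hy
        linarith)
      ⟨a, mem_ball_self hρ0, haK⟩ ⟨x, hx, hxK⟩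
    exact hy3 (interior_subset hy2)
  have hcb : closedBall a ρ ⊆ K := by
    rw [← closure_ball a hρ0.ne']
    exact closure_minimal hball S.kcomp.isClosed
  have key : ∀ k, Nrm K k z' → ∃ l : ℝ, k = l • (z' - a) := by
    intro k hk
    have hk0 : 0 < ‖k‖ := norm_pos_iff.mpr hk.ne_zero
    have h1 : ip k (a + (ρ / ‖k‖) • k) ≤ 1 := by
      apply hk.2.2
      apply hcb
      rw [mem_closedBall, dist_eq_norm, add_sub_cancel_left, norm_smul, Real.norm_eq_abs,
        abs_of_pos (by positivity), div_mul_cancel₀ _ hk0.ne']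
    rw [ip_add_right, ip_smul_right (ρ / ‖k‖), ip_self k] at h1
    have h2 : ρ / ‖k‖ * ‖k‖ ^ 2 = ρ * ‖k‖ := by field_simp
    have h3 : ip k (z' - a) ≥ ρ * ‖k‖ := by rw [ip_sub_right, hk.2.1]; linarith
    have h4 : ip (z' - a) (z' - a) = ρ ^ 2 := by
      rw [ip_self, hρ, dist_comm, dist_eq_norm]
    refine ⟨‖k‖ / ρ, ?_⟩
    rw [← sub_eq_zero]
    apply ip_self_eq_zero
    have h5 : ip (k - (‖k‖ / ρ) • (z' - a)) (k - (‖k‖ / ρ) • (z' - a))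
        = ‖k‖ ^ 2 - 2 * (‖k‖ / ρ) * ip k (z' - a) + (‖k‖ / ρ) ^ 2 * ρ ^ 2 := by
      rw [← h4, ← ip_self k, ip_sub_left k, ip_sub_right k, ip_sub_right ((‖k‖ / ρ) • (z' - a)),
        ip_smul_left, ip_smul_left, ip_smul_right, ip_smul_right, ip_comm (z' - a) k]
      ring
    have h6 : 0 ≤ ip (k - (‖k‖ / ρ) • (z' - a)) (k - (‖k‖ / ρ) • (z' - a)) := by
      rw [ip_self]; positivity
    have h7 : ‖k‖ / ρ * ρ = ‖k‖ := div_mul_cancel₀ _ hρ0.ne'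
    have h8 : 0 < ‖k‖ / ρ := by positivity
    apply le_antisymm _ h6
    rw [h5]
    have : (‖k‖ / ρ) ^ 2 * ρ ^ 2 = ‖k‖ ^ 2 := by rw [← mul_pow, h7]
    have h9 : (‖k‖ / ρ) * ip k (z' - a) ≥ (‖k‖ / ρ) * (ρ * ‖k‖) := by gcongr
    have h10 : (‖k‖ / ρ) * (ρ * ‖k‖) = ‖k‖ ^ 2 := by rw [← mul_assoc, h7]; ring
    linarith
  obtain ⟨k, hk⟩ := S.supp hz'
  refine ⟨z', k, ⟨hz', hk, fun k' hk' => ?_⟩, ?_⟩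
  · obtain ⟨l, hl⟩ := key k hk
    obtain ⟨l', hl'⟩ := key k' hk'
    have e1 := hk.2.1
    have e2 := hk'.2.1
    rw [hl, ip_smul_left] at e1
    rw [hl', ip_smul_left] at e2
    have hv : ip (z' - a) z' ≠ 0 := by
      intro h; rw [h, mul_zero] at e1; norm_num at e1
    have : l' = l := mul_right_cancel₀ hv (e2.trans e1.symm)
    rw [hl, hl', this]
  · have := dist_triangle_left z' z a
    have := hmin' z hz
    linarith

theorem SmoothPt.vis {K L : Set E3} {ν : E3 → E3} {c : E3 → ℝ} (S : Setup K L ν c) {z k e : E3}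
    (h : SmoothPt K z k) (he : ip k e = 0) : Vis L z e :=
  vis_of_sep h.2.1.2.1 he fun _ hl => int_lt h.2.1.2.2 h.2.1.ne_zero (S.lk hl)

theorem SmoothPt.phi {K L : Set E3} {ν : E3 → E3} {c : E3 → ℝ} (S : Setup K L ν c) {z k e : E3}
    (hs : SmoothPt K z k) (he : ip k e = 0) {ι : Type*} {F : Filter ι} {x y : ι → E3} {h : ι → ℝ}
    (hx : Filter.Tendsto x F (nhds z)) (hy : Filter.Tendsto y F (nhds z)) (hh : ∀ᶠ i in F, 0 < h i)
    (hxy : Filter.Tendsto (fun i => (h i)⁻¹ • (y i - x i)) F (nhds e)) :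
    Filter.Tendsto (fun i => (h i)⁻¹ • (pr K (y i) - pr K (x i))) F (nhds e) := by
  rw [Filter.tendsto_iff_ultrafilter]
  intro U hU
  have hx := hx.mono_left hU
  have hy := hy.mono_left hU
  have hxy := hxy.mono_left hU
  have hh : ∀ᶠ i in (U : Filter ι), 0 < h i := hU hh
  have hz := hs.1
  have hz0 := S.ne_zero hz
  obtain ⟨r, hr, hb⟩ := S.lb.ball
  have hlip : LipschitzWith (⟨r, hr.le⟩ : NNReal)⁻¹ (gauge K) := by
    apply S.kconv.lipschitzWith_gauge (r := ⟨r, hr.le⟩) (by exact_mod_cast hr)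
    exact ball_subset_closedBall.trans (hb.trans (S.lk.trans interior_subset))
  have hgx : Filter.Tendsto (fun i => gauge K (x i)) U (nhds 1) := by
    have := (S.gcont.tendsto z).comp hx
    rwa [S.fmem.mp hz] at this
  have hgy : Filter.Tendsto (fun i => gauge K (y i)) U (nhds 1) := by
    have := (S.gcont.tendsto z).comp hy
    rwa [S.fmem.mp hz] at this
  obtain ⟨τ, hτ⟩ := ultra_lim_real U (fun i => (h i)⁻¹ * (gauge K (x i) - gauge K (y i)))
    (r⁻¹ * (‖e‖ + 1)) (by
      have hev : ∀ᶠ i in (U : Filter ι), ‖(h i)⁻¹ • (y i - x i)‖ < ‖e‖ + 1 :=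
        hxy.norm.eventually (gt_mem_nhds (by linarith))
      filter_upwards [hev, hh] with i h1 h2
      have h3 := hlip.dist_le_mul (x i) (y i)
      rw [Real.dist_eq] at h3
      rw [norm_smul, Real.norm_eq_abs, ← dist_eq_norm, dist_comm] at h1
      rw [abs_mul]
      have h4 : ((⟨r, hr.le⟩ : NNReal)⁻¹ : NNReal) = (r⁻¹ : ℝ) := rfl
      rw [h4] at h3
      have h5 : 0 ≤ |(h i)⁻¹| := abs_nonneg _
      calc |(h i)⁻¹| * |gauge K (x i) - gauge K (y i)| ≤ |(h i)⁻¹| * (r⁻¹ * dist (x i) (y i)) := by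
            gcongr
        _ = r⁻¹ * (|(h i)⁻¹| * dist (x i) (y i)) := by ring
        _ ≤ r⁻¹ * (‖e‖ + 1) := by gcongr)
  have hlim : Filter.Tendsto (fun i => (h i)⁻¹ • (pr K (y i) - pr K (x i))) U (nhds (e + τ • z)) := by
    have h1 : Filter.Tendsto (fun i => (gauge K (y i))⁻¹ • ((h i)⁻¹ • (y i - x i))
        + ((gauge K (x i))⁻¹ * (gauge K (y i))⁻¹ * ((h i)⁻¹ * (gauge K (x i) - gauge K (y i)))) • x i)
        U (nhds ((1:ℝ)⁻¹ • e + ((1:ℝ)⁻¹ * (1:ℝ)⁻¹ * τ) • z)) :=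
      ((hgy.inv₀ one_ne_zero).smul hxy).add
        ((((hgx.inv₀ one_ne_zero).mul (hgy.inv₀ one_ne_zero)).mul hτ).smul hx)
    simp only [inv_one, one_smul, one_mul] at h1
    apply h1.congr'
    filter_upwards [hgx.eventually_ne one_ne_zero, hgy.eventually_ne one_ne_zero] with i g1 g2
    rw [pr, pr]
    match_scalars <;> field_simp <;> ring
  have hpx : Filter.Tendsto (fun i => pr K (x i)) U (nhds z) := by
    have := S.pr_tendsto hz0 hx
    rwa [S.pr_self hz] at this
  have hpy : Filter.Tendsto (fun i => pr K (y i)) U (nhds z) := by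
    have := S.pr_tendsto hz0 hy
    rwa [S.pr_self hz] at this
  have suppfam : ∀ x : ι → E3, Filter.Tendsto x U (nhds z) →
      Filter.Tendsto (fun i => pr K (x i)) U (nhds z) → ∃ κ : ι → E3,
      (∀ᶠ i in (U : Filter ι), Nrm K (κ i) (pr K (x i))) ∧ Filter.Tendsto κ U (nhds k) := by
    intro x hx hpx
    have hch : ∀ i, ∃ κ, x i ≠ 0 → Nrm K κ (pr K (x i)) := by
      intro i
      by_cases hi : x i = 0
      · exact ⟨0, fun h => absurd hi h⟩
      · obtain ⟨κ, hκ⟩ := S.supp (S.pr_mem hi)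
        exact ⟨κ, fun _ => hκ⟩
    choose κ hκ using hch
    have hev : ∀ᶠ i in (U : Filter ι), Nrm K (κ i) (pr K (x i)) :=
      (hx.eventually_ne hz0).mono fun i hi => hκ i hi
    obtain ⟨R, hR⟩ := supp_bound S.lb
    obtain ⟨k', hk'⟩ := ultra_lim U κ R (hev.mono fun i hi => hR _ fun l hl =>
      hi.2.2 l (interior_subset (S.lk hl)))
    have : Nrm K k' z := by
      refine ⟨hs.2.1.1, ?_, ?_⟩
      · refine tendsto_nhds_unique (hk'.ip hpx) ?_
        apply (tendsto_const_nhds (x := (1:ℝ))).congr'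
        exact hev.mono fun i hi => hi.2.1.symm
      · intro l hl
        exact le_of_tendsto (hk'.ip tendsto_const_nhds) (hev.mono fun i hi => hi.2.2 l hl)
    rw [hs.2.2 k' this] at hk'
    exact ⟨κ, hev, hk'⟩
  obtain ⟨κ, hκ, hκl⟩ := suppfam x hx hpx
  obtain ⟨κ', hκ', hκl'⟩ := suppfam y hy hpy
  have l1 : ip k (e + τ • z) ≤ 0 := by
    apply le_of_tendsto (hκl.ip hlim)
    filter_upwards [hκ, hκ', hh] with i g1 g2 g3
    rw [ip_smul_right, ip_sub_right, g1.2.1]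
    have := g1.2.2 _ g2.1
    have : 0 < (h i)⁻¹ := by positivity
    nlinarith
  have l2 : 0 ≤ ip k (e + τ • z) := by
    apply ge_of_tendsto (hκl'.ip hlim)
    filter_upwards [hκ, hκ', hh] with i g1 g2 g3
    rw [ip_smul_right, ip_sub_right, g2.2.1]
    have := g2.2.2 _ g1.1
    have : 0 < (h i)⁻¹ := by positivity
    nlinarith
  rw [ip_add_right, ip_smul_right, he, hs.2.1.2.1] at l1 l2
  have hτ0 : τ = 0 := by linarith
  rwa [hτ0, zero_smul, add_zero] at hlim


/-- normalized normal of the graze plane of `y` -/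
def FF (ν : E3 → E3) (c : E3 → ℝ) (z y : E3) : E3 := (c y - ip (ν y) z)⁻¹ • ν y

theorem Setup.fnear {K L : Set E3} {ν : E3 → E3} {c : E3 → ℝ} (S : Setup K L ν c) {z : E3}
    (hz : z ∈ frontier K) : ∀ᶠ y in nhdsWithin z (frontier K), ip (ν y) z ≠ c y := by
  by_contra hc
  rw [Filter.not_eventually] at hc
  have := Filter.frequently_iff_neBot.mp hc
  set U := Ultrafilter.of (nhdsWithin z (frontier K) ⊓ Filter.principal {y | ¬ ip (ν y) z ≠ c y}) with hU
  have hle := Ultrafilter.of_le (nhdsWithin z (frontier K) ⊓ Filter.principal {y | ¬ ip (ν y) z ≠ c y})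
  have h1 : ∀ᶠ y in (U : Filter E3), y ∈ frontier K :=
    (hle.trans inf_le_left) self_mem_nhdsWithin
  have h2 : ∀ᶠ y in (U : Filter E3), ip (ν y) z = c y := by
    have : ∀ᶠ y in (U : Filter E3), ¬ ip (ν y) z ≠ c y :=
      (hle.trans inf_le_right) (Filter.mem_principal_self _)
    filter_upwards [this] with y hy
    simpa using hy
  have h3 : Filter.Tendsto (fun y : E3 => y) U (nhds z) :=
    (hle.trans inf_le_left).trans nhdsWithin_le_nhds
  have hn : ∀ᶠ y in (U : Filter E3), ‖‖ν y‖⁻¹ • ν y‖ = 1 := by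
    filter_upwards [h1] with y hy
    have := norm_pos_iff.mpr (S.nu0 y hy)
    rw [norm_smul, norm_inv, norm_norm, inv_mul_cancel₀ this.ne']
  obtain ⟨a, ha⟩ := ultra_lim U (fun y => ‖ν y‖⁻¹ • ν y) 1 (hn.mono fun y hy => hy.le)
  have han : ‖a‖ = 1 := by
    refine tendsto_nhds_unique ha.norm ?_
    apply (tendsto_const_nhds (x := (1:ℝ))).congr'
    filter_upwards [hn] with y hy using hy.symm
  obtain ⟨t, ht, hd⟩ := S.a4' hz h3 ha (d := fun y => ‖ν y‖⁻¹ * c y) (by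
    filter_upwards [h1] with y hy n p hp hny
    rw [ip_smul_left, S.pl hy hp hny])
  have h4 : ip a z = t * c z := by
    refine tendsto_nhds_unique (ha.ip tendsto_const_nhds) ?_
    apply hd.congr'
    filter_upwards [h2] with y hy
    rw [ip_smul_left, hy]
  have ht0 : t ≠ 0 := by
    rintro rfl
    rw [zero_smul] at ht
    rw [ht, norm_zero] at han
    norm_num at han
  rw [ht, ip_smul_left] at h4
  exact S.a1 hz (mul_left_cancel₀ ht0 h4)

theorem Setup.ff_one {K L : Set E3} {ν : E3 → E3} {c : E3 → ℝ} (S : Setup K L ν c) {z y n p : E3}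
    (hy : y ∈ frontier K) (h : ip (ν y) z ≠ c y) (hn : Nrm L n p) (h1 : ip n y = 1) :
    ip (FF ν c z y) (p - z) = 1 := by
  have := S.pl hy hn h1
  rw [FF, ip_smul_left, ip_sub_right, this]
  exact inv_mul_cancel₀ (sub_ne_zero.mpr (Ne.symm h))

theorem ff_same {ν : E3 → E3} {c : E3 → ℝ} {z y : E3}
    (hz : ip (ν z) z ≠ c z) (hy : ip (ν y) z ≠ c y) (h : FF ν c z y = FF ν c z z) : Same ν c z y := by
  have hz' := sub_ne_zero.mpr (Ne.symm hz)
  have hy' := sub_ne_zero.mpr (Ne.symm hy)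
  have h1 : ν y = ((c y - ip (ν y) z) * (c z - ip (ν z) z)⁻¹) • ν z := by
    rw [mul_smul]
    change _ = _ • FF ν c z z
    rw [← h, FF, smul_smul, mul_inv_cancel₀ hy', one_smul]
  refine ⟨(c y - ip (ν y) z) * (c z - ip (ν z) z)⁻¹, mul_ne_zero hy' (inv_ne_zero hz'), h1, ?_⟩
  have h2 : ip (ν y) z = ((c y - ip (ν y) z) * (c z - ip (ν z) z)⁻¹) * ip (ν z) z := by
    conv_lhs => rw [h1, ip_smul_left]
  have h3 : (c z - ip (ν z) z)⁻¹ * (c z - ip (ν z) z) = 1 := inv_mul_cancel₀ hz'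
  linear_combination (-(c y - ip (ν y) z)) * h3 + h2

theorem exists_onb {k : E3} (hk : k ≠ 0) : ∃ e1 e2 : E3, ip k e1 = 0 ∧ ip k e2 = 0 ∧ ip e1 e1 = 1 ∧
    ip e2 e2 = 1 ∧ cr e1 e2 ≠ 0 ∧ ∀ x, ip k x = 0 → x = ip e1 x • e1 + ip e2 x • e2 := by
  obtain ⟨g, hg, hkg, -⟩ := exists_perp2 k k
  obtain ⟨f, hf, hkf, hgf⟩ := exists_perp2 k g
  have hgn := norm_pos_iff.mpr hg
  have hfn := norm_pos_iff.mpr hf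
  set e1 := ‖g‖⁻¹ • g with he1
  set e2 := ‖f‖⁻¹ • f with he2
  have h11 : ip e1 e1 = 1 := by
    rw [ip_self, he1, norm_smul, norm_inv, norm_norm, inv_mul_cancel₀ hgn.ne', one_pow]
  have h22 : ip e2 e2 = 1 := by
    rw [ip_self, he2, norm_smul, norm_inv, norm_norm, inv_mul_cancel₀ hfn.ne', one_pow]
  have h12 : ip e1 e2 = 0 := by rw [he1, he2, ip_smul_left, ip_smul_right, hgf]; ring
  have hcr : cr e1 e2 ≠ 0 := by
    intro h
    obtain ⟨t, ht⟩ := cr_eq_zero (u := e1) (by intro h0; rw [h0] at h11; simp at h11) h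
    rw [ht, ip_smul_right, h11] at h12
    have : t = 0 := by linarith
    rw [ht, this] at h22
    simp at h22
  have hk1 : ip k e1 = 0 := by rw [he1, ip_smul_right, hkg, mul_zero]
  have hk2 : ip k e2 = 0 := by rw [he2, ip_smul_right, hkf, mul_zero]
  clear_value e1 e2
  refine ⟨e1, e2, hk1, hk2, h11, h22, hcr, fun x hx => ?_⟩
  obtain ⟨s, t, rfl⟩ := span2' hk hcr hk1 hk2 hx
  have h21 : ip e2 e1 = 0 := by rw [ip_comm]; exact h12
  simp [h11, h12, h22, h21]

theorem abs_ip_le {e x : E3} (he : ip e e = 1) : |ip e x| ≤ ‖x‖ := by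
  have h : ‖e‖ = 1 := by
    rw [ip_self] at he
    nlinarith [norm_nonneg e]
  have := abs_real_inner_le_norm e x
  rw [← ip_eq_inner, h, one_mul] at this
  exact this

theorem norm_one {e : E3} (he : ip e e = 1) : ‖e‖ = 1 := by
  rw [ip_self] at he
  nlinarith [norm_nonneg e]

theorem Setup.exists_dir {K L : Set E3} {ν : E3 → E3} {c : E3 → ℝ} (S : Setup K L ν c) {z k : E3}
    (hs : SmoothPt K z k) : ∃ e, e ≠ 0 ∧ ip k e = 0 ∧ ∀ δ > 0, ∃ x h, ip k x = 0 ∧ ‖x‖ < δ ∧ 0 < h ∧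
      h < δ ∧ FF ν c z (pr K (z + (x + h • e))) ≠ FF ν c z (pr K (z + x)) := by
  obtain ⟨e1, e2, hk1, hk2, h11, h22, -, hb⟩ := exists_onb hs.2.1.ne_zero
  have h10 : e1 ≠ 0 := by rintro rfl; simp at h11
  have h20 : e2 ≠ 0 := by rintro rfl; simp at h22
  by_contra! hc
  obtain ⟨δ1, hδ1, H1⟩ := hc e1 h10 hk1
  obtain ⟨δ2, hδ2, H2⟩ := hc e2 h20 hk2
  set E : E3 → E3 := fun x => FF ν c z (pr K (z + x)) with hE
  have key : ∀ e δ, ip e e = 1 → (∀ x h, ip k x = 0 → ‖x‖ < δ → 0 < h → h < δ →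
      E (x + h • e) = E x) → ip k e = 0 → ∀ x (h:ℝ), ip k x = 0 → ‖x‖ + |h| < δ → E (x + h • e) = E x := by
    intro e δ he H hke x h hx hlt
    rcases lt_trichotomy h 0 with h0 | h0 | h0
    · have := H (x + h • e) (-h) (by simp [hx, hke]) (by
        refine (norm_add_le _ _).trans_lt ?_
        rw [norm_smul, norm_one he, Real.norm_eq_abs, mul_one]; exact hlt) (by linarith) (by
        have := norm_nonneg x
        rw [abs_of_neg h0] at hlt; linarith)
      rw [← this]
      congr 1; module
    · simp [h0]
    · apply H x h hx _ h0
      · have := norm_nonneg x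
        rw [abs_of_pos h0] at hlt; linarith
      · have := abs_nonneg h
        linarith
  have K1 := key e1 δ1 h11 H1 hk1
  have K2 := key e2 δ2 h22 H2 hk2
  have K3 : ∀ x, ip k x = 0 → ‖x‖ < min δ1 δ2 / 2 → E x = E 0 := by
    intro x hx hlt
    have a1 := abs_ip_le (x := x) h11
    have a2 := abs_ip_le (x := x) h22
    have m1 := min_le_left δ1 δ2
    have m2 := min_le_right δ1 δ2
    have b1 := K1 0 (ip e1 x) (by simp) (by rw [norm_zero]; have := norm_nonneg x; linarith)
    have b2 := K2 (0 + ip e1 x • e1) (ip e2 x) (by simp [hk1]) (by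
      rw [zero_add, norm_smul, norm_one h11, Real.norm_eq_abs]; linarith)
    rw [b1] at b2
    rw [← b2, zero_add, ← hb x hx]
  apply S.nonconst hs.1
  have t1 : Filter.Tendsto (fun y => ip k y) (nhdsWithin z (frontier K)) (nhds 1) := by
    have := (cont_ip k).tendsto z
    rw [hs.2.1.2.1] at this
    exact this.mono_left nhdsWithin_le_nhds
  have t2 : Filter.Tendsto (fun y => ‖(ip k y)⁻¹ • y - z‖) (nhdsWithin z (frontier K)) (nhds 0) := by
    have : Filter.Tendsto (fun y => (ip k y)⁻¹ • y - z) (nhdsWithin z (frontier K))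
        (nhds ((1:ℝ)⁻¹ • z - z)) :=
      ((t1.inv₀ one_ne_zero).smul (Filter.tendsto_id.mono_left nhdsWithin_le_nhds)).sub tendsto_const_nhds
    have := this.norm
    simpa using this
  filter_upwards [S.fnear hs.1, self_mem_nhdsWithin, t1.eventually (lt_mem_nhds (zero_lt_one)),
    t2.eventually (gt_mem_nhds (show 0 < min δ1 δ2 / 2 by positivity))] with y h1 h2 h3 h4
  apply ff_same (S.a1 hs.1) h1
  have := K3 _ (by rw [ip_sub_right, ip_smul_right, hs.2.1.2.1, inv_mul_cancel₀ h3.ne', sub_self]) h4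
  simp only [hE, add_sub_cancel, add_zero] at this
  rw [S.pr_self hs.1] at this
  rw [← this]
  congr 1
  conv_lhs => rw [← S.pr_self h2]
  rw [pr, pr, gauge_smul_of_nonneg (inv_nonneg.mpr h3.le), smul_smul]
  congr 1
  rw [smul_eq_mul]
  field_simp

theorem Setup.seq {K L : Set E3} {ν : E3 → E3} {c : E3 → ℝ} (S : Setup K L ν c) {z k : E3}
    (hs : SmoothPt K z k) : ∃ (e : E3) (Q : ℕ → E3 → E3), e ≠ 0 ∧ ip k e = 0 ∧ (∀ i, Q i 0 = 0) ∧
      (∀ i, ‖Q i e‖ = 1) ∧ ∀ x y n p, ip k x = 0 → ip k y = 0 → Ct L z (x - y) n p →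
        ∃ P : ℕ → E3, Filter.Tendsto P Filter.atTop (nhds p) ∧
          ∀ᶠ i in Filter.atTop, ip (Q i x - Q i y) (P i - z) = 0 := by
  obtain ⟨e, he, hke, H⟩ := S.exists_dir hs
  have H' : ∀ i : ℕ, ∃ x h, ip k x = 0 ∧ ‖x‖ < 1 / ((i:ℝ) + 1) ∧ 0 < h ∧
      h < 1 / ((i:ℝ) + 1) ∧ FF ν c z (pr K (z + (x + h • e))) ≠ FF ν c z (pr K (z + x)) :=
    fun i => H _ (by positivity)
  choose ξ h hkx hx h0 hh hne using H'
  set E : ℕ → E3 → E3 := fun i x => FF ν c z (pr K (z + (ξ i + h i • x))) with hE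
  have tx : Filter.Tendsto ξ Filter.atTop (nhds 0) :=
    squeeze_zero_norm (fun i => (hx i).le) tendsto_one_div_add_atTop_nhds_zero_nat
  have th : Filter.Tendsto h Filter.atTop (nhds 0) :=
    squeeze_zero (fun i => (h0 i).le) (fun i => (hh i).le) tendsto_one_div_add_atTop_nhds_zero_nat
  have hz0 := S.ne_zero hs.1
  have tz : ∀ x, Filter.Tendsto (fun i => z + (ξ i + h i • x)) Filter.atTop (nhds z) := by
    intro x
    have := (tendsto_const_nhds (x := z)).add (tx.add (th.smul (tendsto_const_nhds (x := x))))
    simpa using this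
  have tp : ∀ x, Filter.Tendsto (fun i => pr K (z + (ξ i + h i • x))) Filter.atTop (nhds z) := by
    intro x
    have := S.pr_tendsto hz0 (tz x)
    rwa [S.pr_self hs.1] at this
  have mem : ∀ x, ∀ᶠ i in Filter.atTop, pr K (z + (ξ i + h i • x)) ∈ frontier K := by
    intro x
    filter_upwards [(tz x).eventually (isOpen_ne.mem_nhds hz0)] with i hi using S.pr_mem hi
  have near : ∀ x, ∀ᶠ i in Filter.atTop, ip (ν (pr K (z + (ξ i + h i • x)))) z
      ≠ c (pr K (z + (ξ i + h i • x))) := by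
    intro x
    exact (tendsto_nhdsWithin_of_tendsto_nhds_of_eventually_within _ (tp x) (mem x)).eventually
      (S.fnear hs.1)
  refine ⟨e, fun i x => ‖E i e - E i 0‖⁻¹ • (E i x - E i 0), he, hke, fun i => by simp, fun i => ?_, ?_⟩
  · have : E i e - E i 0 ≠ 0 := by
      rw [sub_ne_zero]
      have := hne i
      simpa [hE] using this
    rw [norm_smul, norm_inv, norm_norm, inv_mul_cancel₀ (norm_ne_zero_iff.mpr this)]
  · intro x y n p hkx hky hct
    have hkxy : ip k (x - y) = 0 := by rw [ip_sub_right, hkx, hky, sub_self]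
    have hxy : x - y ≠ 0 := by
      intro h
      have := hct.2.2.2
      rw [h] at this
      have h2 : cr z 0 = 0 := by apply ext3 <;> simp [cr_0, cr_1, cr_2]
      rw [h2] at this
      simp at this
    have ph := hs.phi S hkxy (tz y) (tz x) (Filter.Eventually.of_forall h0) (by
      apply (tendsto_const_nhds (x := x - y)).congr
      intro i
      have : z + (ξ i + h i • x) - (z + (ξ i + h i • y)) = h i • (x - y) := by module
      rw [this, smul_smul, inv_mul_cancel₀ (h0 i).ne', one_smul])
    obtain ⟨N, P, hc, -, hP⟩ := ct_family S.lb (tp y) ph hxy (hs.vis S hkxy) hct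
    refine ⟨P, hP, ?_⟩
    filter_upwards [hc, mem x, mem y, near x, near y] with i h1 mx my nx ny
    have a1 := S.ff_one my ny h1.1 h1.2.1
    have a2 := S.ff_one mx nx h1.1 (by
      have := h1.2.2.1
      rw [ip_smul_right, mul_eq_zero, or_iff_right (inv_ne_zero (h0 i).ne'), ip_sub_right, h1.2.1] at this
      linarith)
    rw [← smul_sub, ip_smul_left, sub_sub_sub_cancel_right, ip_sub_left]
    simp only [hE]
    rw [a1, a2, sub_self, mul_zero]

theorem Setup.lemI {K L : Set E3} {ν : E3 → E3} {c : E3 → ℝ} (S : Setup K L ν c) {z k : E3}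
    (hs : SmoothPt K z k) {x y n p m q n' p' : E3} (hx : ip k x = 0) (hy : ip k y = 0)
    (hxy : cr x y ≠ 0) (h1 : Ct L z x n p) (h2 : Ct L z (-x) m q) (h3 : Ct L z y n' p') :
    ip (cr (p - z) (q - z)) (p' - z) ≠ 0 := by
  intro h
  have hk := hs.2.1.ne_zero
  have hpq : p ≠ q := by
    rintro rfl
    have a := h1.2.2.2
    have b := h2.2.2.2
    rw [cr_neg_right, ip_neg_left] at b
    linarith
  have aux : ∀ a : E3, Nrm L n' a → ip n' x ≠ 0 := by
    intro a ha h0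
    obtain ⟨t, ht⟩ := cr_span (a := n') hxy h0 h3.2.2.1
    obtain ⟨s, hs'⟩ := cr_span (a := k) hxy hx hy
    have hs0 : s ≠ 0 := by rintro rfl; simp at hs'; exact hk hs'
    have h4 : n' = (t / s) • k := by
      rw [hs', smul_smul, div_mul_cancel₀ _ hs0]; exact ht
    have h5 := h3.2.1
    rw [h4, ip_smul_left, hs.2.1.2.1, mul_one] at h5
    rw [h5, one_smul] at h4
    have h6 := int_lt hs.2.1.2.2 hk (S.lk h3.1.1)
    rw [← h4, h3.1.2.1] at h6
    exact lt_irrefl _ h6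
  rcases lemma2D S.lb (S.not_mem hs.1) h1.1 h2.1 h3.1 h1.2.1 h2.2.1 h3.2.1 hpq h with h4 | h4
  · rw [h4] at h3
    apply aux p h3.1
    rw [S.smooth h3.1 h1.1]; exact h1.2.2.1
  · rw [h4] at h3
    apply aux q h3.1
    rw [S.smooth h3.1 h2.1]
    have := h2.2.2.1
    rw [ip_neg_right] at this
    linarith

theorem conv_lem {ι : Type*} {F : Filter ι} {s s1 u v w : ι → E3} {a u' v' w' : E3}
    (h1 : Filter.Tendsto s1 F (nhds a)) (hu : Filter.Tendsto u F (nhds u'))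
    (hv : Filter.Tendsto v F (nhds v')) (hw : Filter.Tendsto w F (nhds w'))
    (hne : ip (cr u' v') w' ≠ 0) (su : ∀ᶠ i in F, ip (s i) (u i) = 0)
    (sv : ∀ᶠ i in F, ip (s i) (v i) = 0) (sw : ∀ᶠ i in F, ip (s i - s1 i) (w i) = 0) :
    ∃ b, Filter.Tendsto s F (nhds b) := by
  have t1 := (hu.cr hv).ip hw
  have t2 := ((h1.ip hw).div t1 hne).smul (hu.cr hv)
  refine ⟨_, t2.congr' ?_⟩
  filter_upwards [su, sv, sw, t1.eventually (isOpen_ne.mem_nhds hne)] with i h1 h2 h3 h4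
  have hc : cr (u i) (v i) ≠ 0 := by intro h0; rw [h0] at h4; simp at h4
  obtain ⟨t, ht⟩ := cr_span hc h1 h2
  rw [ip_sub_left, ht, ip_smul_left] at h3
  rw [ht]
  congr 1
  simp only [Pi.div_apply]
  rw [div_eq_iff h4]; linarith


theorem exists_indep {k e : E3} (he : e ≠ 0) : ∃ g, ip k g = 0 ∧ cr e g ≠ 0 := by
  obtain ⟨g, hg, hkg, heg⟩ := exists_perp2 k e
  refine ⟨g, hkg, fun h => ?_⟩
  obtain ⟨t, rfl⟩ := cr_eq_zero he h
  rw [ip_smul_right, mul_eq_zero, or_iff_left (ip_self_pos he).ne'] at heg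
  simp [heg] at hg

theorem cr_comm (a b : E3) : cr a b = - cr b a := by
  apply ext3 <;> simp [cr_0, cr_1, cr_2] <;> ring

theorem cr_add_right (a b d : E3) : cr a (b + d) = cr a b + cr a d := by
  apply ext3 <;> simp [cr_0, cr_1, cr_2] <;> ring

theorem cr_sub_right (a b d : E3) : cr a (b - d) = cr a b - cr a d := by
  apply ext3 <;> simp [cr_0, cr_1, cr_2] <;> ring

theorem cr_add_left (a b d : E3) : cr (b + d) a = cr b a + cr d a := by
  apply ext3 <;> simp [cr_0, cr_1, cr_2] <;> ring

theorem cr_smul_left (t : ℝ) (a b : E3) : cr (t • a) b = t • cr a b := by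
  apply ext3 <;> simp [cr_0, cr_1, cr_2] <;> ring

theorem cr_ne_zero_right {a b : E3} (h : cr a b ≠ 0) : b ≠ 0 := by
  rintro rfl
  apply h
  apply ext3 <;> simp [cr_0, cr_1, cr_2]

theorem cr_ne_zero_left {a b : E3} (h : cr a b ≠ 0) : a ≠ 0 := by
  rintro rfl
  apply h
  apply ext3 <;> simp [cr_0, cr_1, cr_2]

theorem cr_ne_comm {a b : E3} (h : cr a b ≠ 0) : cr b a ≠ 0 := by
  rw [cr_comm]; simpa using h

theorem Setup.lim {K L : Set E3} {ν : E3 → E3} {c : E3 → ℝ} (S : Setup K L ν c) {z k : E3}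
    (hs : SmoothPt K z k) : ∃ (e : E3) (f : E3 → E3), e ≠ 0 ∧ ip k e = 0 ∧ f 0 = 0 ∧ f e ≠ 0 ∧
      ∀ x y n p, ip k x = 0 → ip k y = 0 → Ct L z (x - y) n p → ip (f x - f y) (p - z) = 0 := by
  obtain ⟨e, Q, he, hke, Q0, Qe, H⟩ := S.seq hs
  set U : Ultrafilter ℕ := Filter.hyperfilter ℕ with hU
  have hUle : (U : Filter ℕ) ≤ Filter.atTop := by
    have := Filter.hyperfilter_le_cofinite (α := ℕ)
    rwa [Nat.cofinite_eq_atTop] at this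
  have step : ∀ x y, ip k x = 0 → ip k y = 0 → cr x y ≠ 0 →
      (∃ b, Filter.Tendsto (fun i => Q i x) U (nhds b)) →
      ∃ b, Filter.Tendsto (fun i => Q i y) U (nhds b) := by
    rintro x y hx hy hxy ⟨a, ha⟩
    have hy0 := cr_ne_zero_right hxy
    obtain ⟨n, p, m, q, h1, h2, -⟩ := ct_pair S.lb (hs.vis S hy) hy0
    have hyx : ip k (y - x) = 0 := by rw [ip_sub_right, hx, hy, sub_self]
    have hcr : cr y (y - x) ≠ 0 := by
      rw [cr_sub_right, cr_self, zero_sub, ← cr_comm]; exact hxy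
    obtain ⟨n', p', h3⟩ := ct_exists S.lb (hs.vis S hyx) (cr_ne_zero_right hcr)
    have hI := S.lemI hs hy hyx hcr h1 h2 h3
    obtain ⟨P, hP, P1⟩ := H y 0 n p hy (by simp) (by simpa using h1)
    obtain ⟨P', hP', P1'⟩ := H 0 y m q (by simp) hy (by simpa using h2)
    obtain ⟨P'', hP'', P1''⟩ := H y x n' p' hy hx h3
    refine conv_lem ha ((hP.mono_left hUle).sub_const z) ((hP'.mono_left hUle).sub_const z)
      ((hP''.mono_left hUle).sub_const z) hI ?_ ?_ (hUle P1'')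
    · filter_upwards [hUle P1] with i hi
      rwa [Q0, sub_zero] at hi
    · filter_upwards [hUle P1'] with i hi
      rw [Q0, zero_sub, ip_neg_left] at hi
      linarith
  have ce := ultra_lim U (fun i => Q i e) 1 (Filter.Eventually.of_forall fun i => (Qe i).le)
  obtain ⟨g, hg, heg⟩ := exists_indep (k := k) he
  have cg := step e g hke hg heg ce
  have call : ∀ x, ∃ b, ip k x = 0 → Filter.Tendsto (fun i => Q i x) U (nhds b) := by
    intro x
    by_cases hx : ip k x = 0
    · simp only [hx, true_imp_iff]
      by_cases hc : cr e x = 0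
      · obtain ⟨t, rfl⟩ := cr_eq_zero he hc
        by_cases ht : t = 0
        · subst ht
          simp only [zero_smul, Q0]
          exact ⟨0, tendsto_const_nhds⟩
        · apply step g _ hg hx _ cg
          rw [cr_smul_right]
          exact smul_ne_zero ht (cr_ne_comm heg)
      · exact step e x hke hx hc ce
    · exact ⟨0, fun h => absurd h hx⟩
  choose f hf using call
  refine ⟨e, f, he, hke, ?_, ?_, ?_⟩
  · have := hf 0 (by simp)
    simp only [Q0] at this
    exact tendsto_nhds_unique this tendsto_const_nhds |>.trans rfl
  · intro h
    have h1 := (hf e hke).norm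
    simp only [Qe, h, norm_zero] at h1
    have := tendsto_nhds_unique h1 tendsto_const_nhds
    norm_num at this
  · intro x y n p hx hy hc
    obtain ⟨P, hP, P1⟩ := H x y n p hx hy hc
    refine tendsto_nhds_unique (((hf x hx).sub (hf y hy)).ip ((hP.mono_left hUle).sub_const z)) ?_
    apply (tendsto_const_nhds (x := (0:ℝ))).congr'
    filter_upwards [hUle P1] with i hi using hi.symm

theorem Setup.diff {K L : Set E3} {ν : E3 → E3} {c : E3 → ℝ} (S : Setup K L ν c) {z k : E3}
    (hs : SmoothPt K z k) : ∃ e1 e2 S1 S2 : E3, cr e1 e2 ≠ 0 ∧ ip k e1 = 0 ∧ ip k e2 = 0 ∧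
      (∀ (a b : ℝ) (n p : E3), Ct L z (a • e1 + b • e2) n p → ip (a • S1 + b • S2) (p - z) = 0) ∧
      (∀ (a b a' b' : ℝ) (n p : E3), a * b' - a' * b ≠ 0 → Ct L z (a • e1 + b • e2) n p →
        ip (a' • S1 + b' • S2) (p - z) ≠ 0) := by
  obtain ⟨e, f, he, hke, f0, fe, H⟩ := S.lim hs
  have H1 : ∀ x n p, ip k x = 0 → Ct L z x n p → ip (f x) (p - z) = 0 := by
    intro x n p hx h
    have := H x 0 n p hx (by simp) (by simpa using h)
    rwa [f0, sub_zero] at this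
  have H1' : ∀ x n p, ip k x = 0 → Ct L z (-x) n p → ip (f x) (p - z) = 0 := by
    intro x n p hx h
    have := H 0 x n p (by simp) hx (by simpa using h)
    rw [f0, zero_sub, ip_neg_left] at this
    linarith
  have H2 : ∀ x y n p, ip k x = 0 → ip k y = 0 → Ct L z y n p → ip (f (x + y) - f x) (p - z) = 0 := by
    intro x y n p hx hy h
    exact H (x + y) x n p (by simp [hx, hy]) hx (by simpa using h)
  have H2' : ∀ x y n p, ip k x = 0 → ip k y = 0 → Ct L z (-y) n p →
      ip (f (x + y) - f x) (p - z) = 0 := by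
    intro x y n p hx hy h
    have := H x (x + y) n p hx (by simp [hx, hy]) (by simpa using h)
    rw [← neg_sub, ip_neg_left] at this
    linarith
  -- additivity
  have add : ∀ x y, ip k x = 0 → ip k y = 0 → cr x y ≠ 0 → f (x + y) = f x + f y := by
    intro x y hx hy hxy
    obtain ⟨n, p, m, q, h1, h2, -⟩ := ct_pair S.lb (hs.vis S hy) (cr_ne_zero_right hxy)
    obtain ⟨n', p', h3⟩ := ct_exists S.lb (hs.vis S hx) (cr_ne_zero_left hxy)
    have hI := S.lemI hs hy hx (cr_ne_comm hxy) h1 h2 h3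
    rw [← sub_eq_zero]
    apply eq_zero_of_ip hI
    · have a := H2 x y n p hx hy h1
      have b := H1 y n p hy h1
      rw [← sub_sub, ip_sub_left, a, b, sub_zero]
    · have a := H2' x y m q hx hy h2
      have b := H1' y m q hy h2
      rw [← sub_sub, ip_sub_left, a, b, sub_zero]
    · have a := H2 y x n' p' hy hx h3
      have b := H1 x n' p' hx h3
      rw [add_comm x y, add_comm (f x), ← sub_sub, ip_sub_left, a, b, sub_zero]
  -- non vanishing
  have zero : ∀ x y, ip k x = 0 → ip k y = 0 → cr x y ≠ 0 → f x = 0 → f y = 0 := by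
    intro x y hx hy hxy hf
    have hyx : ip k (y - x) = 0 := by rw [ip_sub_right, hx, hy, sub_self]
    have hcr : cr y (y - x) ≠ 0 := by
      rw [cr_sub_right, cr_self, zero_sub, ← cr_comm]; exact hxy
    obtain ⟨n, p, m, q, h1, h2, -⟩ := ct_pair S.lb (hs.vis S hy) (cr_ne_zero_right hxy)
    obtain ⟨n', p', h3⟩ := ct_exists S.lb (hs.vis S hyx) (cr_ne_zero_right hcr)
    apply eq_zero_of_ip (S.lemI hs hy hyx hcr h1 h2 h3) (H1 y n p hy h1) (H1' y m q hy h2)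
    have := H y x n' p' hy hx h3
    rwa [hf, sub_zero] at this
  have nz : ∀ x, ip k x = 0 → x ≠ 0 → f x ≠ 0 := by
    intro x hx hx0 hf
    by_cases hc : cr x e = 0
    · obtain ⟨g, hg, hxg⟩ := exists_indep (k := k) hx0
      have h1 := zero x g hx hg hxg hf
      obtain ⟨t, rfl⟩ := cr_eq_zero hx0 hc
      have ht : t ≠ 0 := by rintro rfl; simp at he
      apply fe (zero g _ hg hke _ h1)
      rw [cr_smul_right]; exact smul_ne_zero ht (cr_ne_comm hxg)
    · exact fe (zero x e hx hke hc hf)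
  -- independence
  have ind : ∀ x y n p, ip k x = 0 → ip k y = 0 → cr x y ≠ 0 → Ct L z y n p → ip (f x) (p - z) ≠ 0 := by
    intro x y n' p' hx hy hxy h3 h0
    obtain ⟨n, p, m, q, h1, h2, -⟩ := ct_pair S.lb (hs.vis S hx) (cr_ne_zero_left hxy)
    exact nz x hx (cr_ne_zero_left hxy) (eq_zero_of_ip (S.lemI hs hx hy hxy h1 h2 h3)
      (H1 x n p hx h1) (H1' x m q hx h2) h0)
  -- homogeneity
  have hom : ∀ x, ip k x = 0 → x ≠ 0 → ∀ t : ℝ, f (t • x) = t • f x := by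
    intro x hx hx0
    obtain ⟨y, hy, hxy⟩ := exists_indep (k := k) hx0
    have hkt : ∀ t : ℝ, ip k (t • x) = 0 := fun t => by rw [ip_smul_right, hx, mul_zero]
    have ay : ∀ t : ℝ, f (y + t • x) = f y + f (t • x) := by
      intro t
      by_cases ht : t = 0
      · simp [ht, f0]
      · apply add _ _ hy (hkt t)
        rw [cr_smul_right]; exact smul_ne_zero ht (cr_ne_comm hxy)
    have aa : ∀ s t : ℝ, f ((s + t) • x) = f (s • x) + f (t • x) := by
      intro s t
      by_cases ht : t = 0
      · simp [ht, f0]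
      · have h1 := ay (s + t)
        have h2 := add (y + s • x) (t • x) (by simp [hy, hx]) (hkt t) (by
          rw [cr_smul_right, cr_add_left, cr_smul_left, cr_self, smul_zero, add_zero]
          exact smul_ne_zero ht (cr_ne_comm hxy))
        have h3 : y + s • x + t • x = y + (s + t) • x := by module
        rw [h3, h1, ay s, add_assoc] at h2
        exact add_left_cancel h2
    let φ : ℝ →+ E3 := AddMonoidHom.mk' (fun t => f (t • x)) aa
    obtain ⟨n, p, m, q, h1, h2, -⟩ := ct_pair S.lb (hs.vis S hx) hx0
    obtain ⟨n', p', h3⟩ := ct_exists S.lb (hs.vis S hy) (cr_ne_zero_right hxy)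
    have hI := S.lemI hs hx hy hxy h1 h2 h3
    have hcr : cr (p - z) (q - z) ≠ 0 := by intro h; rw [h] at hI; simp at hI
    have par : ∀ t : ℝ, ∃ σ : ℝ, f (t • x) = σ • f x := by
      intro t
      rcases lt_trichotomy t 0 with ht | ht | ht
      · apply parallel_of hcr (nz x hx hx0) _ _ (H1 x n p hx h1) (H1' x m q hx h2)
        · apply H1' _ n p (hkt t)
          have := ct_smul h1 (neg_pos.mpr ht)
          rwa [neg_smul] at this
        · apply H1 _ m q (hkt t)
          have := ct_smul h2 (neg_pos.mpr ht)
          rwa [smul_neg, neg_smul, neg_neg] at this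
      · exact ⟨0, by simp [ht, f0]⟩
      · apply parallel_of hcr (nz x hx hx0) _ _ (H1 x n p hx h1) (H1' x m q hx h2)
        · exact H1 _ n p (hkt t) (ct_smul h1 ht)
        · apply H1' _ m q (hkt t)
          have := ct_smul h2 ht
          rwa [smul_neg] at this
    choose σ hσ using par
    have te : Filter.Tendsto (fun t : ℝ => y + t • x) (nhds 0) (nhds y) := by
      have : Continuous fun t : ℝ => y + t • x := by fun_prop
      have := this.tendsto 0
      simpa using this
    obtain ⟨N, P, hc, -, hP⟩ := ct_family S.lb (tendsto_const_nhds (x := z)) te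
      (cr_ne_zero_right hxy) (hs.vis S hy) h3
    have hx3 := ind x y n' p' hx hy hxy h3
    have ty := (tendsto_const_nhds (x := f y)).ip (hP.sub_const z)
    have tx := (tendsto_const_nhds (x := f x)).ip (hP.sub_const z)
    rw [H1 y n' p' hy h3] at ty
    have tσ : Filter.Tendsto σ (nhds 0) (nhds 0) := by
      have h4 := (ty.div tx hx3).neg
      rw [zero_div, neg_zero] at h4
      apply h4.congr'
      filter_upwards [hc, tx.eventually (isOpen_ne.mem_nhds hx3)] with t h5 h6
      have h7 := H1 _ _ _ (by simp [hx, hy]) h5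
      rw [ay, hσ, ip_add_left, ip_smul_left] at h7
      simp only [Pi.div_apply]
      rw [neg_eq_iff_eq_neg, div_eq_iff h6]; linarith
    have hφ : Continuous φ := by
      apply continuous_of_continuousAt_zero φ
      have : Filter.Tendsto (fun t => σ t • f x) (nhds 0) (nhds ((0:ℝ) • f x)) :=
        tσ.smul_const (f x)
      rw [ContinuousAt, map_zero]
      rw [zero_smul] at this
      exact this.congr fun t => (hσ t).symm
    intro t
    have h8 := map_real_smul φ hφ t 1
    simp only [φ, AddMonoidHom.mk'_apply, smul_eq_mul, mul_one, one_smul] at h8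
    exact h8
  obtain ⟨g, hg, heg⟩ := exists_indep (k := k) he
  have hg0 := cr_ne_zero_right heg
  have hlin : ∀ a b : ℝ, f (a • e + b • g) = a • f e + b • f g := by
    intro a b
    by_cases ha : a = 0
    · simp [ha, hom g hg hg0]
    by_cases hb : b = 0
    · simp [hb, hom e hke he]
    rw [add _ _ (by simp [hke]) (by simp [hg]) (by
      rw [cr_smul_left, cr_smul_right]; exact smul_ne_zero ha (smul_ne_zero hb heg)),
      hom e hke he, hom g hg hg0]
  refine ⟨e, g, f e, f g, heg, hke, hg, ?_, ?_⟩
  · intro a b n p h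
    rw [← hlin]
    exact H1 _ n p (by simp [hke, hg]) h
  · intro a b a' b' n p hab h
    rw [← hlin]
    apply ind _ _ n p (by simp [hke, hg]) (by simp [hke, hg]) _ h
    have : cr (a' • e + b' • g) (a • e + b • g) = (-(a * b' - a' * b)) • cr e g := by
      apply ext3 <;> simp [cr_0, cr_1, cr_2] <;> ring
    rw [this]
    exact smul_ne_zero (neg_ne_zero.mpr hab) heg


theorem hasDerivAt_squeeze {f g h : ℝ → ℝ} {a d : ℝ} (hg : HasDerivAt g d a) (hh : HasDerivAt h d a)
    (h1 : ∀ᶠ x in nhds a, f x ≤ g x) (h2 : ∀ᶠ x in nhds a, h x ≤ f x) (e1 : g a = f a)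
    (e2 : h a = f a) : HasDerivAt f d a := by
  rw [hasDerivAt_iff_isLittleO] at hg hh ⊢
  refine Asymptotics.IsBigO.trans_isLittleO ?_ (hg.norm_left.add hh.norm_left)
  apply Asymptotics.IsBigO.of_bound 1
  filter_upwards [h1, h2] with x h3 h4
  rw [one_mul, Real.norm_eq_abs, Real.norm_eq_abs, e1, e2]
  have a1 := le_abs_self (g x - f a - (x - a) • d)
  have a2 := neg_abs_le (h x - f a - (x - a) • d)
  have a3 := abs_nonneg (g x - f a - (x - a) • d)
  have a4 := abs_nonneg (h x - f a - (x - a) • d)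
  rw [Real.norm_eq_abs, Real.norm_eq_abs, abs_of_nonneg (add_nonneg a3 a4), abs_le]
  constructor <;> linarith

/-- bilinear kernel -/
def GG (A B C D s t : ℝ) : ℝ :=
  A * Real.sin s * Real.sin t - B * Real.sin s * Real.cos t - C * Real.cos s * Real.sin t
    + D * Real.cos s * Real.cos t

theorem analysis_lemma {A B C D : ℝ} {r : ℝ → ℝ} (hr : ∀ t, 0 < r t)
    (per : ∀ t, r (t + 2 * Real.pi) = r t) (hG : ∀ t, 0 < GG A B C D t t)
    (ineq : ∀ s t, r t * GG A B C D s t ≤ r s * GG A B C D s s) :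
    B = C ∧ ∃ c, ∀ t, r t ^ 2 * GG A B C D t t = c := by
  set G := GG A B C D with hGdef
  let D1 : ℝ → ℝ → ℝ := fun s t => A * Real.cos s * Real.sin t - B * Real.cos s * Real.cos t
    + C * Real.sin s * Real.sin t - D * Real.sin s * Real.cos t
  let D2 : ℝ → ℝ → ℝ := fun s t => A * Real.sin s * Real.cos t + B * Real.sin s * Real.sin t
    - C * Real.cos s * Real.cos t - D * Real.cos s * Real.sin t
  have d1 : ∀ s t, HasDerivAt (fun s => G s t) (D1 s t) s := by
    intro s t
    have hs := Real.hasDerivAt_sin s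
    have hc := Real.hasDerivAt_cos s
    have := ((((hs.const_mul A).mul_const (Real.sin t)).sub ((hs.const_mul B).mul_const (Real.cos t))).sub
      ((hc.const_mul C).mul_const (Real.sin t))).add ((hc.const_mul D).mul_const (Real.cos t))
    refine this.congr_deriv ?_
    simp only [D1]; ring
  have d2 : ∀ s t, HasDerivAt (fun t => G s t) (D2 s t) t := by
    intro s t
    have hs := Real.hasDerivAt_sin t
    have hc := Real.hasDerivAt_cos t
    have := (((hs.const_mul (A * Real.sin s)).sub (hc.const_mul (B * Real.sin s))).sub
      (hs.const_mul (C * Real.cos s))).add (hc.const_mul (D * Real.cos s))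
    refine this.congr_deriv ?_
    simp only [D2]; ring
  have d12 : ∀ t, HasDerivAt (fun t => G t t) (D1 t t + D2 t t) t := by
    intro t
    have hs := Real.hasDerivAt_sin t
    have hc := Real.hasDerivAt_cos t
    have := ((((hs.const_mul A).mul hs).sub ((hs.const_mul B).mul hc)).sub
      ((hc.const_mul C).mul hs)).add ((hc.const_mul D).mul hc)
    refine this.congr_deriv ?_
    simp only [D1, D2]; ring
  have dr : ∀ s, HasDerivAt r (- r s * D2 s s / G s s) s := by
    intro s
    have hs := (hG s).ne'
    have hg : HasDerivAt (fun t => r s * G s s / G s t) (- r s * D2 s s / G s s) s := by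
      refine ((hasDerivAt_const s (r s * G s s)).div (d2 s s) hs).congr_deriv ?_
      field_simp; ring
    have hh : HasDerivAt (fun t => r s * G t s / G t t) (- r s * D2 s s / G s s) s := by
      refine (((d1 s s).const_mul (r s)).div (d12 s) hs).congr_deriv ?_
      field_simp; ring
    refine hasDerivAt_squeeze hg hh ?_ ?_ ?_ ?_
    · filter_upwards [(d2 s s).continuousAt.eventually (lt_mem_nhds (hG s))] with t ht
      rw [le_div_iff₀ ht]; exact ineq s t
    · filter_upwards with t
      rw [div_le_iff₀ (hG t)]; exact ineq t s
    · field_simp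
    · field_simp
  have dΦ : ∀ s, HasDerivAt (fun t => r t ^ 2 * G t t) (r s ^ 2 * (C - B)) s := by
    intro s
    have hs := (hG s).ne'
    refine (((dr s).pow 2).mul (d12 s)).congr_deriv ?_
    have : D1 s s - D2 s s = C - B := by
      simp only [D1, D2]
      linear_combination (C - B) * Real.sin_sq_add_cos_sq s
    rw [← this]
    simp only [Pi.pow_apply]
    field_simp
    ring
  have hBC : B = C := by
    obtain ⟨s, -, hs⟩ := exists_hasDerivAt_eq_zero (f := fun t => r t ^ 2 * G t t)
      (f' := fun s => r s ^ 2 * (C - B)) (a := 0) (b := 2 * Real.pi) Real.two_pi_pos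
      (fun t _ => (dΦ t).continuousAt.continuousWithinAt) (by
        have h1 := per 0
        rw [zero_add] at h1
        simp [h1, hGdef, GG]) (fun t _ => dΦ t)
    have := (pow_pos (hr s) 2).ne'
    rw [mul_eq_zero, or_iff_right this] at hs
    linarith
  refine ⟨hBC, r 0 ^ 2 * G 0 0, fun t => ?_⟩
  apply is_const_of_deriv_eq_zero (f := fun t => r t ^ 2 * G t t) (fun t => (dΦ t).differentiableAt)
  intro t
  rw [(dΦ t).deriv, hBC]; ring

theorem const_sign {f : ℝ → ℝ} (hf : Continuous f) (h0 : ∀ t, f t ≠ 0) :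
    (∀ t, 0 < f t) ∨ (∀ t, f t < 0) := by
  by_contra! hc
  obtain ⟨⟨a, ha⟩, b, hb⟩ := hc
  obtain ⟨t, ht⟩ := mem_range_of_exists_le_of_exists_ge hf ⟨a, ha⟩ ⟨b, hb⟩
  exact h0 t ht


theorem polar (a b : ℝ) (h : a ≠ 0 ∨ b ≠ 0) : ∃ ρ t : ℝ, 0 < ρ ∧ a = ρ * Real.cos t ∧ b = ρ * Real.sin t := by
  refine ⟨‖(⟨a, b⟩ : ℂ)‖, Complex.arg ⟨a, b⟩, ?_, ?_, ?_⟩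
  · rw [norm_pos_iff]
    intro h0
    rw [Complex.ext_iff] at h0
    simp at h0
    rcases h with h | h
    · exact h h0.1
    · exact h h0.2
  · rw [Complex.norm_mul_cos_arg]
  · rw [Complex.norm_mul_sin_arg]

theorem Setup.conic_aux {K L : Set E3} {ν : E3 → E3} {c : E3 → ℝ} (S : Setup K L ν c) {z k : E3}
    (hs : SmoothPt K z k) {e1 e2 S1 S2 : E3} (hcr : cr e1 e2 ≠ 0) (hk1 : ip k e1 = 0)
    (hk2 : ip k e2 = 0)
    (H1 : ∀ (a b : ℝ) (n p : E3), Ct L z (a • e1 + b • e2) n p → ip (a • S1 + b • S2) (p - z) = 0)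
    (H2 : ∀ (a b a' b' : ℝ) (n p : E3), a * b' - a' * b ≠ 0 → Ct L z (a • e1 + b • e2) n p →
        ip (a' • S1 + b' • S2) (p - z) ≠ 0)
    {N P : ℝ → E3} (hC : ∀ t, Ct L z (Real.cos t • e1 + Real.sin t • e2) (N t) (P t))
    (hper : ∀ t, P (t + 2 * Real.pi) = P t) (hpi : ∀ t, P (t + Real.pi) ≠ P t)
    (hpos : ∀ t, 0 < ip ((-Real.sin t) • S1 + Real.cos t • S2) (P t - z)) :
    ∃ Q : E3 →ₗ[ℝ] E3, (∀ x y, ip (Q x) y = ip (Q y) x) ∧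
      ∀ t, ∃ a : ℝ, N t = a • Q (P t - z) := by
  have hk := hs.2.1.ne_zero
  have hkz := hs.2.1.2.1
  have hd : ∀ t, 0 < 1 - ip k (P t) := fun t => by
    have := int_lt hs.2.1.2.2 hk (S.lk (hC t).1.1); linarith
  set v : ℝ → E3 := fun t => (1 - ip k (P t))⁻¹ • (P t - z) with hv
  have hkv : ∀ t, ip k (v t) = -1 := fun t => by
    simp only [hv]
    rw [ip_smul_right, ip_sub_right, hkz]
    have := (hd t).ne'
    field_simp
    ring
  set r : ℝ → ℝ := fun t => ip ((-Real.sin t) • S1 + Real.cos t • S2) (v t) with hr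
  have hr0 : ∀ t, 0 < r t := fun t => by
    simp only [hr, hv]
    rw [ip_smul_right]
    exact mul_pos (inv_pos.mpr (hd t)) (hpos t)
  have h0v : ∀ t, ip (Real.cos t • S1 + Real.sin t • S2) (v t) = 0 := fun t => by
    simp only [hv]
    rw [ip_smul_right, H1 _ _ _ _ (hC t), mul_zero]
  have hS1 : ∀ t, ip S1 (v t) = - r t * Real.sin t := fun t => by
    have a := h0v t
    simp only [hr]
    simp only [ip_add_left, ip_smul_left] at a ⊢
    linear_combination Real.cos t * a - ip S1 (v t) * (Real.sin_sq_add_cos_sq t)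
  have hS2 : ∀ t, ip S2 (v t) = r t * Real.cos t := fun t => by
    have a := h0v t
    simp only [hr]
    simp only [ip_add_left, ip_smul_left] at a ⊢
    linear_combination Real.sin t * a - ip S2 (v t) * (Real.sin_sq_add_cos_sq t)
  set μ : ℝ → ℝ := fun t => - Real.sin t * ip (N t) e1 + Real.cos t * ip (N t) e2 with hμ
  have hN1 : ∀ t, ip (N t) e1 = - μ t * Real.sin t := fun t => by
    have a := (hC t).2.2.1
    simp only [hμ]
    simp only [ip_add_right, ip_smul_right] at a ⊢
    linear_combination Real.cos t * a - ip (N t) e1 * (Real.sin_sq_add_cos_sq t)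
  have hN2 : ∀ t, ip (N t) e2 = μ t * Real.cos t := fun t => by
    have a := (hC t).2.2.1
    simp only [hμ]
    simp only [ip_add_right, ip_smul_right] at a ⊢
    linear_combination Real.sin t * a - ip (N t) e2 * (Real.sin_sq_add_cos_sq t)
  have hNv : ∀ t, ip (N t) (v t) = 0 := fun t => by
    simp only [hv]
    rw [ip_smul_right, ip_sub_right, (hC t).1.2.1, (hC t).2.1, sub_self, mul_zero]
  have hNle : ∀ s t, ip (N s) (v t) ≤ 0 := fun s t => by
    simp only [hv]
    rw [ip_smul_right, ip_sub_right, (hC s).2.1]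
    have := (hC s).1.2.2 _ (hC t).1.1
    exact mul_nonpos_of_nonneg_of_nonpos (inv_nonneg.mpr (hd t).le) (by linarith)
  have hNlt : ∀ t, ip (N t) (v (t + Real.pi)) < 0 := fun t => by
    simp only [hv]
    rw [ip_smul_right, ip_sub_right, (hC t).2.1]
    have := nrm_lt S.lb (hC t).1 (hC (t + Real.pi)).1.1 (hpi t)
    exact mul_neg_of_pos_of_neg (inv_pos.mpr (hd _)) (by linarith)
  obtain ⟨M11, hM11⟩ : ∃ m, m = ip S1 e1 := ⟨_, rfl⟩
  obtain ⟨M12, hM12⟩ : ∃ m, m = ip S1 e2 := ⟨_, rfl⟩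
  obtain ⟨M21, hM21⟩ : ∃ m, m = ip S2 e1 := ⟨_, rfl⟩
  obtain ⟨M22, hM22⟩ : ∃ m, m = ip S2 e2 := ⟨_, rfl⟩
  have hdet : M11 * M22 - M12 * M21 ≠ 0 := by
    intro h0
    have key : ∀ a b : ℝ, (a ≠ 0 ∨ b ≠ 0) → a * M11 + b * M21 = 0 → a * M12 + b * M22 = 0 → False := by
      intro a b hab m1 m2
      obtain ⟨ρ, t, hρ, rfl, rfl⟩ := polar a b hab
      obtain ⟨s, hs1⟩ := parallel_of (a := (ρ * Real.cos t) • S1 + (ρ * Real.sin t) • S2) hcr hk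
        (by rw [ip_add_left, ip_smul_left, ip_smul_left, ← hM11, ← hM21]; exact m1)
        (by rw [ip_add_left, ip_smul_left, ip_smul_left, ← hM12, ← hM22]; exact m2) hk1 hk2
      have h3 : (ρ * Real.cos t) • S1 + (ρ * Real.sin t) • S2
        = ρ • (Real.cos t • S1 + Real.sin t • S2) := by module
      have h4 := h0v t
      have h5 : s = 0 := by
        have h6 : ip ((ρ * Real.cos t) • S1 + (ρ * Real.sin t) • S2) (v t) = 0 := by
          rw [h3, ip_smul_left, h4, mul_zero]
        rw [hs1, ip_smul_left, hkv] at h6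
        linarith
      have h7 := H2 _ _ (ρ * Real.cos (t)) (ρ * Real.sin t) _ _ (by
        rw [Real.cos_add_pi_div_two, Real.sin_add_pi_div_two]
        have : -Real.sin t * (ρ * Real.sin t) - ρ * Real.cos t * Real.cos t = -ρ := by
          linear_combination -ρ * Real.sin_sq_add_cos_sq t
        rw [this]
        linarith) (hC (t + Real.pi / 2))
      rw [hs1, h5] at h7
      simp at h7
    by_cases h1 : M11 ≠ 0 ∨ M21 ≠ 0
    · exact key (-M21) M11 (by rcases h1 with h | h; exact Or.inr h; exact Or.inl (neg_ne_zero.mpr h))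
        (by ring) (by linarith)
    · push Not at h1
      by_cases h2 : M12 ≠ 0 ∨ M22 ≠ 0
      · exact key (-M22) M12 (by rcases h2 with h | h; exact Or.inr h; exact Or.inl (neg_ne_zero.mpr h))
          (by rw [h1.1, h1.2]; ring) (by ring)
      · push Not at h2
        exact key 1 1 (by simp) (by rw [h1.1, h1.2]; ring) (by rw [h2.1, h2.2]; ring)
  obtain ⟨det, hdet'⟩ : ∃ d, d = M11 * M22 - M12 * M21 := ⟨_, rfl⟩
  rw [← hdet'] at hdet
  have main : ∀ s t, ip (N s) (v t) * det
      = μ s * (r t * GG M22 (-M12) (-M21) M11 s t - r s * GG M22 (-M12) (-M21) M11 s s) := by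
    intro s t
    obtain ⟨α, β, hαβ⟩ := span2' hk hcr hk1 hk2 (x := v t - v s) (by rw [ip_sub_right, hkv, hkv, sub_self])
    have x1 : α * M11 + β * M12 = - r t * Real.sin t + r s * Real.sin s := by
      have := congrArg (ip S1) hαβ
      rw [ip_sub_right, hS1, hS1, ip_add_right, ip_smul_right, ip_smul_right, ← hM11, ← hM12] at this
      linarith
    have x2 : α * M21 + β * M22 = r t * Real.cos t - r s * Real.cos s := by
      have := congrArg (ip S2) hαβ
      rw [ip_sub_right, hS2, hS2, ip_add_right, ip_smul_right, ip_smul_right, ← hM21, ← hM22] at this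
      linarith
    have x3 : ip (N s) (v t) = - μ s * Real.sin s * α + μ s * Real.cos s * β := by
      have := congrArg (ip (N s)) hαβ
      rw [ip_sub_right, hNv, ip_add_right, ip_smul_right α, ip_smul_right β, hN1, hN2] at this
      linarith
    rw [x3, hdet']
    simp only [GG]
    linear_combination (- μ s * Real.sin s * M22 - μ s * Real.cos s * M21) * x1
      + (μ s * Real.sin s * M12 + μ s * Real.cos s * M11) * x2
  have hpi2 : ∀ t, GG M22 (-M12) (-M21) M11 t (t + Real.pi) = - GG M22 (-M12) (-M21) M11 t t := by
    intro t
    simp only [GG, Real.sin_add_pi, Real.cos_add_pi]; ring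
  have hsgn : ∀ t, 0 < μ t / det * GG M22 (-M12) (-M21) M11 t t := by
    intro t
    have h1 := main t (t + Real.pi)
    have h2 := hNlt t
    have h3 := hr0 t
    have h4 := hr0 (t + Real.pi)
    rw [hpi2] at h1
    have h5 : ip (N t) (v (t + Real.pi)) = -(r (t + Real.pi) + r t) * (μ t / det * GG M22 (-M12) (-M21) M11 t t) := by
      rw [eq_comm, ← sub_eq_zero]
      field_simp
      linarith
    rw [h5] at h2
    by_contra hc
    push Not at hc
    nlinarith
  obtain ⟨σ, hσ, hσG⟩ : ∃ σ : ℝ, σ ^ 2 = 1 ∧ ∀ t, 0 < σ * GG M22 (-M12) (-M21) M11 t t := by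
    have hcont : Continuous fun t => GG M22 (-M12) (-M21) M11 t t := by
      unfold GG; fun_prop
    rcases const_sign hcont (fun t h => by have := hsgn t; rw [h] at this; simp at this) with h | h
    · exact ⟨1, by norm_num, fun t => by have := h t; linarith⟩
    · exact ⟨-1, by norm_num, fun t => by have := h t; linarith⟩
  have hGσ : ∀ s t, GG (σ * M22) (σ * -M12) (σ * -M21) (σ * M11) s t
      = σ * GG M22 (-M12) (-M21) M11 s t := by
    intro s t; simp only [GG]; ring
  have hμσ : ∀ t, 0 < μ t / det * σ := by
    intro t
    have h1 := mul_pos (hsgn t) (hσG t)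
    by_contra hc
    push Not at hc
    nlinarith [sq_nonneg (GG M22 (-M12) (-M21) M11 t t)]
  obtain ⟨hBC, c0, hc0⟩ := analysis_lemma (A := σ * M22) (B := σ * -M12) (C := σ * -M21) (D := σ * M11)
    hr0 (fun t => by
      simp only [hr, hv]
      rw [hper, Real.sin_add_two_pi, Real.cos_add_two_pi])
    (fun t => by rw [hGσ]; exact hσG t) (fun s t => by
      rw [hGσ, hGσ]
      have h1 := main s t
      have h2 := hNle s t
      have h3 : ip (N s) (v t) = (μ s / det * σ) * (r t * (σ * GG M22 (-M12) (-M21) M11 s t)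
          - r s * (σ * GG M22 (-M12) (-M21) M11 s s)) := by
        have : (μ s / det * σ) * (r t * (σ * GG M22 (-M12) (-M21) M11 s t)
          - r s * (σ * GG M22 (-M12) (-M21) M11 s s)) = σ ^ 2 * (μ s * (r t * GG M22 (-M12) (-M21) M11 s t
          - r s * GG M22 (-M12) (-M21) M11 s s) / det) := by ring
        rw [this, hσ, ← h1]
        field_simp
      rw [h3] at h2
      have h4 := hμσ s
      by_contra hc
      push Not at hc
      nlinarith)
  have hsym : M21 = M12 := by
    have hσ0 : σ ≠ 0 := by rintro rfl; norm_num at hσ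
    have := mul_left_cancel₀ hσ0 hBC
    linarith
  subst hsym
  let Q : E3 →ₗ[ℝ] E3 :=
    { toFun := fun x => (σ * M22 * ip S1 x - σ * M21 * ip S2 x) • S1
        + (- σ * M21 * ip S1 x + σ * M11 * ip S2 x) • S2 - (c0 * ip k x) • k
      map_add' := by intro x y; simp only [ip_add_right]; module
      map_smul' := by intro t x; simp only [ip_smul_right, RingHom.id_apply]; module }
  have hQ : ∀ x, Q x = (σ * M22 * ip S1 x - σ * M21 * ip S2 x) • S1
        + (- σ * M21 * ip S1 x + σ * M11 * ip S2 x) • S2 - (c0 * ip k x) • k := fun x => rfl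
  refine ⟨Q, ?_, ?_⟩
  · intro x y
    rw [hQ, hQ]
    simp only [ip_add_left, ip_sub_left, ip_smul_left]
    ring
  · intro t
    have hQv : ∀ y, ip (Q (v t)) y = (σ * M22 * (- r t * Real.sin t) - σ * M21 * (r t * Real.cos t)) * ip S1 y
        + (- σ * M21 * (- r t * Real.sin t) + σ * M11 * (r t * Real.cos t)) * ip S2 y + c0 * ip k y := by
      intro y
      rw [hQ, hS1, hS2, hkv]
      simp only [ip_add_left, ip_sub_left, ip_smul_left]
      ring
    have q1 : ip (Q (v t)) e1 = σ * det * (- r t * Real.sin t) := by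
      rw [hQv, hk1, ← hM11, ← hM21, hdet']; ring
    have q2 : ip (Q (v t)) e2 = σ * det * (r t * Real.cos t) := by
      rw [hQv, hk2, ← hM12, ← hM22, hdet']; ring
    have q3 : ip (Q (v t)) (v t) = 0 := by
      rw [hQv, hS1, hS2, hkv, ← hc0 t]
      simp only [GG]; ring
    have hσ0 : σ ≠ 0 := by rintro rfl; norm_num at hσ
    have q0 : Q (v t) ≠ 0 := by
      intro h0
      rw [h0, ip_zero_left] at q1 q2
      have h1 : σ * det * r t ≠ 0 := mul_ne_zero (mul_ne_zero hσ0 hdet) (hr0 t).ne'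
      have h2 : Real.sin t = 0 := by
        apply (mul_eq_zero.mp (show σ * det * r t * Real.sin t = 0 by linarith)).resolve_left h1
      have h3 : Real.cos t = 0 := by
        apply (mul_eq_zero.mp (show σ * det * r t * Real.cos t = 0 by linarith)).resolve_left h1
      have := Real.sin_sq_add_cos_sq t
      rw [h2, h3] at this
      norm_num at this
    have hcrv : cr (Real.cos t • e1 + Real.sin t • e2) (v t) ≠ 0 := by
      intro h0
      obtain ⟨s, h1⟩ := cr_eq_zero (by
        intro h2
        have h3 := (hC t).2.2.2
        rw [h2] at h3
        have h4 : cr z 0 = 0 := by apply ext3 <;> simp [cr_0, cr_1, cr_2]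
        rw [h4] at h3
        simp at h3) h0
      have h2 := hkv t
      rw [h1] at h2
      simp [hk1, hk2] at h2
    obtain ⟨a, ha⟩ := parallel_of hcrv q0 (hC t).2.2.1 (hNv t) (by
      rw [ip_add_right, ip_smul_right, ip_smul_right, q1, q2]; ring) q3
    refine ⟨a * (1 - ip k (P t))⁻¹, ?_⟩
    rw [ha]
    simp only [hv]
    rw [map_smul, smul_smul]

/-- Every contact plane through `z` is given by a fixed quadratic form. -/
theorem Setup.conic {K L : Set E3} {ν : E3 → E3} {c : E3 → ℝ} (S : Setup K L ν c) {z k : E3}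
    (hs : SmoothPt K z k) : ∃ Q : E3 →ₗ[ℝ] E3, (∀ x y, ip (Q x) y = ip (Q y) x) ∧
      ∀ n p, Nrm L n p → ip n z = 1 → ∃ a : ℝ, a ≠ 0 ∧ n = a • Q (p - z) := by
  obtain ⟨e1, e2, S1, S2, hcr, hk1, hk2, H1, H2⟩ := S.diff hs
  have hk := hs.2.1.ne_zero
  have hke : ∀ a b : ℝ, ip k (a • e1 + b • e2) = 0 := fun a b => by simp [hk1, hk2]
  have hne : ∀ t : ℝ, Real.cos t • e1 + Real.sin t • e2 ≠ 0 := by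
    intro t h
    have h1 : ∀ a b : ℝ, cr (a • e1 + b • e2) ((-b) • e1 + a • e2)
        = (b ^ 2 + a ^ 2) • cr e1 e2 := by
      intro a b
      apply ext3 <;> simp [cr_0, cr_1, cr_2] <;> ring
    replace h1 := h1 (Real.cos t) (Real.sin t)
    rw [Real.sin_sq_add_cos_sq, one_smul] at h1
    rw [← h1] at hcr
    exact cr_ne_zero_left hcr h
  choose N P hC using fun t : ℝ => ct_exists S.lb (hs.vis S (hke (Real.cos t) (Real.sin t))) (hne t)
  have hcre : ∀ t : ℝ, cr z (Real.cos t • e1 + Real.sin t • e2) ≠ 0 := fun t =>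
    vis_cr S.lb (hs.vis S (hke _ _)) (hne t)
  have hper : ∀ t, P (t + 2 * Real.pi) = P t := by
    intro t
    have h1 := hC (t + 2 * Real.pi)
    rw [Real.sin_add_two_pi, Real.cos_add_two_pi] at h1
    exact (ct_unique S.lb (hcre t) h1 (hC t)).2
  have hpi : ∀ t, P (t + Real.pi) ≠ P t := by
    intro t h
    have h1 := (hC (t + Real.pi)).2.2.2
    have h2 := (hC t).2.2.2
    rw [Real.sin_add_pi, Real.cos_add_pi, h] at h1
    have h3 : (-Real.cos t) • e1 + (-Real.sin t) • e2 = -(Real.cos t • e1 + Real.sin t • e2) := by module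
    rw [h3, cr_neg_right, ip_neg_left] at h1
    linarith
  have hPc : Continuous P := by
    rw [continuous_iff_continuousAt]
    intro t
    have hcont : Continuous fun t : ℝ => Real.cos t • e1 + Real.sin t • e2 := by fun_prop
    exact (ct_tendsto S.lb (tendsto_const_nhds (x := z)) (hcont.tendsto t) (hne t)
      (hs.vis S (hke _ _)) (hC t) (Filter.Eventually.of_forall hC)).2
  have hRc : Continuous fun t => ip ((-Real.sin t) • S1 + Real.cos t • S2) (P t - z) := by
    have : Continuous fun t => (((-Real.sin t) • S1 + Real.cos t • S2, P t - z) : E3 × E3) := by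
      fun_prop
    exact continuous_ip.comp this
  have hR0 : ∀ t, ip ((-Real.sin t) • S1 + Real.cos t • S2) (P t - z) ≠ 0 := by
    intro t
    apply H2 _ _ _ _ _ _ _ (hC t)
    have : Real.cos t * Real.cos t - -Real.sin t * Real.sin t = 1 := by
      linear_combination Real.sin_sq_add_cos_sq t
    rw [this]; norm_num
  have hQ : ∃ Q : E3 →ₗ[ℝ] E3, (∀ x y, ip (Q x) y = ip (Q y) x) ∧
      ∀ t, ∃ a : ℝ, N t = a • Q (P t - z) := by
    rcases const_sign hRc hR0 with h | h
    · exact S.conic_aux hs hcr hk1 hk2 H1 H2 hC hper hpi h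
    · have hn : ∀ a b : ℝ, a • (-S1) + b • (-S2) = -(a • S1 + b • S2) := fun a b => by module
      refine S.conic_aux (S1 := -S1) (S2 := -S2) hs hcr hk1 hk2 ?_ ?_ hC hper hpi ?_
      · intro a b n p hc
        rw [hn, ip_neg_left, H1 a b n p hc, neg_zero]
      · intro a b a' b' n p h0 hc
        rw [hn, ip_neg_left]
        exact neg_ne_zero.mpr (H2 a b a' b' n p h0 hc)
      · intro t
        rw [hn, ip_neg_left]
        have := h t
        linarith
  obtain ⟨Q, hQs, hQ⟩ := hQ
  refine ⟨Q, hQs, fun n p hn hnz => ?_⟩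
  have aux : ∀ e, e ≠ 0 → ip k e = 0 → Ct L z e n p → ∃ a : ℝ, a ≠ 0 ∧ n = a • Q (p - z) := by
    intro e he hke hc
    obtain ⟨a, b, rfl⟩ := span2' hk hcr hk1 hk2 hke
    obtain ⟨ρ, t, hρ, rfl, rfl⟩ := polar a b (by
      by_contra! h
      rw [h.1, h.2] at he
      simp at he)
    have h1 := ct_smul hc (inv_pos.mpr hρ)
    have h2 : ρ⁻¹ • ((ρ * Real.cos t) • e1 + (ρ * Real.sin t) • e2)
        = Real.cos t • e1 + Real.sin t • e2 := by
      rw [smul_add, smul_smul, smul_smul, inv_mul_cancel_left₀ hρ.ne', inv_mul_cancel_left₀ hρ.ne']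
    rw [h2] at h1
    obtain ⟨h3, h4⟩ := ct_unique S.lb (hcre t) h1 (hC t)
    obtain ⟨a, ha⟩ := hQ t
    rw [← h3, ← h4] at ha
    refine ⟨a, ?_, ha⟩
    rintro rfl
    rw [zero_smul] at ha
    exact hn.ne_zero ha
  obtain ⟨e, he, hke', hne'⟩ := exists_perp2 k n
  have hv := hs.vis S hke'
  rcases lt_trichotomy (ip (cr z e) p) 0 with h | h | h
  · apply aux (-e) (neg_ne_zero.mpr he) (by rw [ip_neg_right, hke', neg_zero])
    refine ⟨hn, hnz, by rw [ip_neg_right, hne', neg_zero], ?_⟩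
    rw [cr_neg_right, ip_neg_left]; linarith
  · exfalso
    obtain ⟨n1, p1, h1⟩ := ct_exists S.lb hv he
    obtain ⟨t, ht⟩ := cr_span (a := n - n1) (vis_cr S.lb hv he)
      (by rw [ip_sub_left, hnz, h1.2.1, sub_self]) (by rw [ip_sub_left, hne', h1.2.2.1, sub_self])
    have h2 : ip (n - n1) p = 0 := by rw [ht, ip_smul_left, h, mul_zero]
    rw [ip_sub_left, hn.2.1] at h2
    have h3 := nrm_unique S.lb h1.1 hn.1 (by linarith)
    have h4 := h1.2.2.2
    rw [← h3, h] at h4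
    exact lt_irrefl _ h4
  · exact aux e he hke' ⟨hn, hnz, hne', h⟩


theorem Setup.sdir {K L : Set E3} {ν : E3 → E3} {c : E3 → ℝ} (S : Setup K L ν c) {z w : E3}
    (hz : z ∈ frontier K) (hw : w ∈ frontier K) (hzw : ip (ν z) w = 0) {Q : E3 →ₗ[ℝ] E3}
    (hQ : ∀ n p, Nrm L n p → ip n z = 1 → ∃ a : ℝ, a ≠ 0 ∧ n = a • Q (p - z)) :
    ∃ d n p n' p', d ≠ 0 ∧ ip (ν z) d = 0 ∧ ip (ν w) d = 0 ∧ ip (Q d) z = 0 ∧ ip (Q d) w = 0 ∧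
      Nrm L n p ∧ ip n z = 1 ∧ ip n w = 1 ∧ Nrm L n' p' ∧ ip n' z = 1 ∧ ip n' w = -1 := by
  obtain ⟨n, p, m, q, hn, hm, nz, nw, mz, mw, hpq⟩ := S.pair hz hw hzw
  obtain ⟨n', p', m', q', hn', hm', nz', nw', mz', mw', hpq'⟩ := S.pair hz (S.neg_mem hw)
    (by rw [ip_neg_right, hzw, neg_zero])
  rw [ip_neg_right] at nw' mw'
  have nw'' : ip n' w = -1 := by linarith
  have mw'' : ip m' w = -1 := by linarith
  have hq : ∀ n p x, Nrm L n p → ip n z = 1 → ip n x = 0 → ip (Q (p - z)) x = 0 := by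
    intro n p x h1 h2 h3
    obtain ⟨a, ha, rfl⟩ := hQ n p h1 h2
    rw [ip_smul_left, mul_eq_zero] at h3
    exact h3.resolve_left ha
  have hd0 : p - q ≠ 0 := sub_ne_zero.mpr hpq
  have hd0' : p' - q' ≠ 0 := sub_ne_zero.mpr hpq'
  have e1 : ip (Q (p - q)) (w - z) = 0 := by
    have a := hq n p (w - z) hn nz (by rw [ip_sub_right, nz, nw, sub_self])
    have b := hq m q (w - z) hm mz (by rw [ip_sub_right, mz, mw, sub_self])
    have : p - q = (p - z) - (q - z) := by module
    rw [this, map_sub, ip_sub_left, a, b, sub_self]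
  have e2 : ip (Q (p' - q')) (w + z) = 0 := by
    have a := hq n' p' (w + z) hn' nz' (by rw [ip_add_right, nz', nw'']; ring)
    have b := hq m' q' (w + z) hm' mz' (by rw [ip_add_right, mz', mw'']; ring)
    have : p' - q' = (p' - z) - (q' - z) := by module
    rw [this, map_sub, ip_sub_left, a, b, sub_self]
  have hcr : cr (ν z) (ν w) ≠ 0 := by
    intro h
    obtain ⟨t, ht⟩ := cr_eq_zero (S.nu0 z hz) h
    apply S.a0 hw
    rw [ht, ip_smul_left, hzw, mul_zero]
  have d1 : ip (ν z) (p - q) = 0 := by rw [ip_sub_right, S.pl hz hn nz, S.pl hz hm mz, sub_self]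
  have d2 : ip (ν w) (p - q) = 0 := by rw [ip_sub_right, S.pl hw hn nw, S.pl hw hm mw, sub_self]
  have d1' : ip (ν z) (p' - q') = 0 := by rw [ip_sub_right, S.pl hz hn' nz', S.pl hz hm' mz', sub_self]
  have d2' : ip (ν w) (p' - q') = 0 := by
    rw [ip_sub_right, S.a3 hw hn' nw'', S.a3 hw hm' mw'', sub_self]
  obtain ⟨t, ht⟩ := parallel_of (a := p' - q') (b := p - q) hcr hd0 (by rwa [ip_comm]) (by rwa [ip_comm])
    (by rwa [ip_comm]) (by rwa [ip_comm])
  have ht0 : t ≠ 0 := by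
    rintro rfl
    rw [zero_smul] at ht
    exact hd0' ht
  rw [ht, map_smul, ip_smul_left, mul_eq_zero, or_iff_right ht0, ip_add_right] at e2
  rw [ip_sub_right] at e1
  exact ⟨p - q, n, p, n', p', hd0, d1, d2, by linarith, by linarith, hn, nz, nw, hn', nz', nw''⟩

theorem Setup.sym_smooth {K L : Set E3} {ν : E3 → E3} {c : E3 → ℝ} (S : Setup K L ν c) {z w k : E3}
    (hs : SmoothPt K z k) (hw : w ∈ frontier K) (hzw : ip (ν z) w = 0) : ip (ν w) z = 0 := by
  have hz := hs.1
  obtain ⟨Q, hsym, hQ⟩ := S.conic hs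
  obtain ⟨d, n, p, n', p', hd0, d1, d2, qz, qw, hn, nz, nw, hn', nz', nw'⟩ := S.sdir hz hw hzw hQ
  -- second direction
  have hg := S.gpos hd0
  have hd2 : ip (ν z) (pr K d) = 0 := by rw [pr, ip_smul_right, d1, mul_zero]
  obtain ⟨d', -, -, -, -, hd0', d1', d2', qz', -⟩ := S.sdir hz (S.pr_mem hd0) hd2 hQ
  have hcr' : cr d d' ≠ 0 := by
    intro h
    obtain ⟨t, ht⟩ := cr_eq_zero hd0 h
    have ht0 : t ≠ 0 := by rintro rfl; rw [zero_smul] at ht; exact hd0' ht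
    have h1 := S.a0 (S.pr_mem hd0)
    apply h1
    have h2 : pr K d = ((gauge K d)⁻¹ * t⁻¹) • d' := by
      rw [ht, smul_smul, mul_assoc, inv_mul_cancel₀ ht0, mul_one, pr]
    have h3 : ip (ν (pr K d)) (((gauge K d)⁻¹ * t⁻¹) • d') = 0 := by
      rw [ip_smul_right, d2', mul_zero]
    rw [← h2] at h3
    exact h3
  have qPi : ∀ x, ip (ν z) x = 0 → ip (Q x) z = 0 := by
    intro x hx
    obtain ⟨s, t, rfl⟩ := span2' (S.nu0 z hz) hcr' d1 d1' hx
    rw [map_add, map_smul, map_smul, ip_add_left, ip_smul_left, ip_smul_left, qz, qz']; ring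
  have hcr : cr w d ≠ 0 := by
    intro h
    obtain ⟨t, ht⟩ := cr_eq_zero (S.ne_zero hw) h
    have ht0 : t ≠ 0 := by rintro rfl; rw [zero_smul] at ht; exact hd0 ht
    rw [ht, ip_smul_right, mul_eq_zero, or_iff_right ht0] at d2
    exact S.a0 hw d2
  have hz0 := S.a0 hz
  have decomp : ∀ x, ∃ s t : ℝ, x = (ip (ν z) x / ip (ν z) z) • z + (s • w + t • d) := by
    intro x
    obtain ⟨s, t, hst⟩ := span2' (S.nu0 z hz) hcr hzw d1 (x := x - (ip (ν z) x / ip (ν z) z) • z) (by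
      rw [ip_sub_right, ip_smul_right]; field_simp; ring)
    exact ⟨s, t, by rw [← hst]; module⟩
  have qwz := qPi w hzw
  have qwd : ip (Q w) d = 0 := by rw [hsym]; exact qw
  obtain ⟨a, ha, hna⟩ := hQ n p hn nz
  have qww : ip (Q w) w ≠ 0 := by
    intro h0
    have h1 : ∀ x, ip (Q w) x = 0 := by
      intro x
      obtain ⟨s, t, hst⟩ := decomp x
      rw [hst, ip_add_right, ip_add_right, ip_smul_right, ip_smul_right, ip_smul_right, qwz, qwd, h0]
      ring
    have h2 := nw
    rw [hna, ip_smul_left, hsym, h1, mul_zero] at h2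
    norm_num at h2
  obtain ⟨a', ha', hna'⟩ := hQ n' p' hn' nz'
  have e1 : ip (Q (p - z)) (w - z) = 0 := by
    have : ip n (w - z) = 0 := by rw [ip_sub_right, nz, nw, sub_self]
    rw [hna, ip_smul_left, mul_eq_zero] at this
    exact this.resolve_left ha
  have e2 : ip (Q (p' - z)) (w + z) = 0 := by
    have : ip n' (w + z) = 0 := by rw [ip_add_right, nz', nw']; ring
    rw [hna', ip_smul_left, mul_eq_zero] at this
    exact this.resolve_left ha'
  have e3 : ip (Q (p - p')) z = 0 := qPi _ (by rw [ip_sub_right, S.pl hz hn nz, S.pl hz hn' nz', sub_self])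
  have qzw : ip (Q z) w = 0 := by rw [hsym]; exact qwz
  have e4 : ip (Q (p + p')) w = 0 := by
    rw [map_sub, ip_sub_left] at e3
    rw [map_sub, ip_sub_left, ip_sub_right, ip_sub_right] at e1
    rw [map_sub, ip_sub_left, ip_add_right, ip_add_right] at e2
    rw [map_add, ip_add_left]
    linarith
  obtain ⟨s, t, hst⟩ := decomp (p + p')
  have e5 : ip (ν z) (p + p') = 2 * c z := by
    rw [ip_add_right, S.pl hz hn nz, S.pl hz hn' nz']; ring
  rw [e5] at hst
  have e6 : ip (ν w) (p + p') = 0 := by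
    rw [ip_add_right, S.pl hw hn nw, S.a3 hw hn' nw']; ring
  rw [hst] at e4 e6
  rw [map_add, map_add, map_smul, map_smul, map_smul, ip_add_left, ip_add_left, ip_smul_left,
    ip_smul_left, ip_smul_left, qzw, qw, mul_zero, mul_zero, zero_add, add_zero, mul_eq_zero,
    or_iff_left qww] at e4
  rw [ip_add_right, ip_add_right, ip_smul_right, ip_smul_right, ip_smul_right, e4, d2, zero_mul,
    mul_zero, add_zero, add_zero, mul_eq_zero] at e6
  refine e6.resolve_left ?_
  have := S.cne hz
  positivity


theorem Setup.nlim {K L : Set E3} {ν : E3 → E3} {c : E3 → ℝ} (S : Setup K L ν c) {ι : Type*}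
    (U : Ultrafilter ι) {x : ι → E3} {x' : E3} (hx' : x' ∈ frontier K)
    (hx : Filter.Tendsto x U (nhds x')) (hm : ∀ᶠ i in (U : Filter ι), x i ∈ frontier K) :
    ∃ t : ℝ, t ≠ 0 ∧ Filter.Tendsto (fun i => ‖ν (x i)‖⁻¹ • ν (x i)) U (nhds (t • ν x')) := by
  have hn : ∀ᶠ i in (U : Filter ι), ‖‖ν (x i)‖⁻¹ • ν (x i)‖ = 1 := by
    filter_upwards [hm] with y hy
    have := norm_pos_iff.mpr (S.nu0 _ hy)
    rw [norm_smul, norm_inv, norm_norm, inv_mul_cancel₀ this.ne']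
  obtain ⟨a, ha⟩ := ultra_lim U _ 1 (hn.mono fun y hy => hy.le)
  have han : ‖a‖ = 1 := by
    refine tendsto_nhds_unique ha.norm ?_
    apply (tendsto_const_nhds (x := (1:ℝ))).congr'
    filter_upwards [hn] with y hy using hy.symm
  obtain ⟨t, ht, -⟩ := S.a4' hx' hx ha (d := fun i => ‖ν (x i)‖⁻¹ * c (x i)) (by
    filter_upwards [hm] with y hy n p hp hny
    rw [ip_smul_left, S.pl hy hp hny])
  refine ⟨t, ?_, ht ▸ ha⟩
  rintro rfl
  rw [zero_smul] at ht
  rw [ht, norm_zero] at han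
  norm_num at han

theorem Setup.sym_all {K L : Set E3} {ν : E3 → E3} {c : E3 → ℝ} (S : Setup K L ν c) {z w : E3}
    (hz : z ∈ frontier K) (hw : w ∈ frontier K) (hzw : ip (ν z) w = 0) : ip (ν w) z = 0 := by
  choose x k hs hd using fun i : ℕ => S.dense_smooth hz (ε := 1 / ((i:ℝ) + 1)) (by positivity)
  set U : Ultrafilter ℕ := Filter.hyperfilter ℕ with hU
  have hUle : (U : Filter ℕ) ≤ Filter.atTop := by
    have := Filter.hyperfilter_le_cofinite (α := ℕ)
    rwa [Nat.cofinite_eq_atTop] at this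
  have hx : Filter.Tendsto x U (nhds z) := by
    apply Filter.Tendsto.mono_left _ hUle
    rw [tendsto_iff_dist_tendsto_zero]
    exact squeeze_zero (fun i => dist_nonneg) (fun i => (hd i).le)
      tendsto_one_div_add_atTop_nhds_zero_nat
  obtain ⟨t, ht, ha⟩ := S.nlim U hz hx (Filter.Eventually.of_forall fun i => (hs i).1)
  set a : ℕ → E3 := fun i => ‖ν (x i)‖⁻¹ • ν (x i) with hadef
  have ty : Filter.Tendsto (fun i => w - ip (a i) w • a i) U (nhds w) := by
    have := (tendsto_const_nhds (x := w)).sub ((ha.ip (tendsto_const_nhds (x := w))).smul ha)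
    rwa [ip_smul_left, hzw, mul_zero, zero_smul, sub_zero] at this
  have hy0 : ∀ᶠ i in (U : Filter ℕ), w - ip (a i) w • a i ≠ 0 :=
    ty.eventually (isOpen_ne.mem_nhds (S.ne_zero hw))
  have tw := S.pr_tendsto (S.ne_zero hw) ty
  rw [S.pr_self hw] at tw
  have hmem : ∀ᶠ i in (U : Filter ℕ), pr K (w - ip (a i) w • a i) ∈ frontier K := by
    filter_upwards [hy0] with i hi using S.pr_mem hi
  obtain ⟨s, hs0, hb⟩ := S.nlim U hw tw hmem
  have h1 : ip (s • ν w) z = 0 := by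
    refine tendsto_nhds_unique (hb.ip hx) ?_
    apply (tendsto_const_nhds (x := (0:ℝ))).congr'
    filter_upwards [hmem] with i hi
    rw [ip_smul_left]
    have hn := norm_pos_iff.mpr (S.nu0 _ (hs i).1)
    have haa : ip (a i) (a i) = 1 := by
      rw [ip_self, hadef]
      simp only
      rw [norm_smul, norm_inv, norm_norm, inv_mul_cancel₀ hn.ne', one_pow]
    have hνa : ν (x i) = ‖ν (x i)‖ • a i := by
      simp only [hadef]
      rw [smul_smul, mul_inv_cancel₀ hn.ne', one_smul]
    rw [S.sym_smooth (hs i) hi, mul_zero]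
    rw [hνa, ip_smul_left, pr, ip_smul_right, ip_sub_right, ip_smul_right, haa]
    ring
  rw [ip_smul_left, mul_eq_zero] at h1
  exact h1.resolve_left hs0

theorem Setup.final {K L : Set E3} {ν : E3 → E3} {c : E3 → ℝ} (S : Setup K L ν c) {u : E3}
    (hu : u ≠ 0) : ∃ v : E3, ‖v‖ = 1 ∧ ∀ x ∈ frontier K, ip u x = 0 → ip (ν x) v = 0 := by
  obtain ⟨e1, e2, h1, h2, -, -, hcr, -⟩ := exists_onb hu
  have h10 := cr_ne_zero_left hcr
  have h20 := cr_ne_zero_right hcr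
  obtain ⟨v, hv0, hv1, hv2⟩ := exists_perp2 (ν (pr K e1)) (ν (pr K e2))
  have hvm := S.pr_mem hv0
  have s1 := S.sym_all (S.pr_mem h10) hvm (by rw [pr.eq_1 K v, ip_smul_right, hv1, mul_zero])
  have s2 := S.sym_all (S.pr_mem h20) hvm (by rw [pr.eq_1 K v, ip_smul_right, hv2, mul_zero])
  rw [pr.eq_1 K e1, ip_smul_right, mul_eq_zero, or_iff_right (inv_ne_zero (S.gpos h10).ne')] at s1
  rw [pr.eq_1 K e2, ip_smul_right, mul_eq_zero, or_iff_right (inv_ne_zero (S.gpos h20).ne')] at s2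
  obtain ⟨t, ht⟩ := parallel_of hcr hu s1 s2 h1 h2
  have hvn := norm_pos_iff.mpr hv0
  refine ⟨‖v‖⁻¹ • v, by rw [norm_smul, norm_inv, norm_norm, inv_mul_cancel₀ hvn.ne'], ?_⟩
  intro x hx hux
  have h3 := S.sym_all hvm hx (by rw [ht, ip_smul_left, hux, mul_zero])
  rw [pr, ip_smul_right, mul_eq_zero, or_iff_right (inv_ne_zero (S.gpos hv0).ne')] at h3
  rw [ip_smul_right, h3, mul_zero]

theorem plane_rep (P : AffineSubspace ℝ E3) (h : IsPlane P) : ∃ (n : E3) (c : ℝ), n ≠ 0 ∧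
    (∀ x, x ∈ P.direction ↔ ip n x = 0) ∧ ∀ p ∈ P, ip n p = c := by
  have h1 : Module.finrank ℝ P.directionᗮ = 1 := by
    have := Submodule.finrank_add_finrank_orthogonal P.direction
    rw [IsPlane] at h
    rw [h] at this
    have h3 : Module.finrank ℝ E3 = 3 := by simp
    omega
  obtain ⟨⟨n, hn⟩, hn0, hspan⟩ := finrank_eq_one_iff'.mp h1
  have hd : ∀ x, x ∈ P.direction ↔ ip n x = 0 := by
    intro x
    constructor
    · intro hx
      rw [ip_eq_inner]
      exact Submodule.inner_left_of_mem_orthogonal hx hn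
    · intro hx
      rw [← Submodule.orthogonal_orthogonal P.direction, Submodule.mem_orthogonal]
      intro y hy
      obtain ⟨t, ht⟩ := hspan ⟨y, hy⟩
      have : y = t • n := by
        have := congrArg Subtype.val ht
        exact this.symm
      rw [← ip_eq_inner, this, ip_smul_left, hx, mul_zero]
  have hn0' : n ≠ 0 := by
    rintro rfl
    exact hn0 rfl
  by_cases hP : ∃ q, q ∈ P
  · obtain ⟨q, hq⟩ := hP
    refine ⟨n, ip n q, hn0', hd, fun p hp => ?_⟩
    have := (hd (p - q)).mp (AffineSubspace.vsub_mem_direction hp hq)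
    rw [ip_sub_right] at this
    linarith
  · exact ⟨n, 0, hn0', hd, fun p hp => absurd ⟨p, hp⟩ hP⟩

theorem statement6
    (K L : Set E3)
    (hKcomp : IsCompact K) (hKconv : Convex ℝ K) (hKint : (interior K).Nonempty)
    (hKsym : K = -K)
    (hLcomp : IsCompact L) (hLconv : Convex ℝ L) (hLint : (interior L).Nonempty)
    (hLsym : L = -L) (hLstrict : StrictConvex ℝ L)
    (hLK : L ⊆ interior K)
    (Δ : E3 → AffineSubspace ℝ E3)
    (hΔ : ∀ z ∈ frontier K, IsPlane (Δ z) ∧ graze L z ⊆ (Δ z : Set E3))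
    (hAF : AlmostFree K L Δ) :
    ∀ u : E3, ‖u‖ = 1 → ∃ v : E3, ‖v‖ = 1 ∧
      ∀ x ∈ ((ℝ ∙ u)ᗮ : Submodule ℝ E3).carrier ∩ frontier K,
        v ∈ (Δ x).direction := by
  have hrep : ∀ z, ∃ (n : E3) (c : ℝ), z ∈ frontier K → n ≠ 0 ∧
      (∀ x, x ∈ (Δ z).direction ↔ ip n x = 0) ∧ ∀ p ∈ Δ z, ip n p = c := by
    intro z
    by_cases hz : z ∈ frontier K
    · obtain ⟨n, c, h⟩ := plane_rep (Δ z) (hΔ z hz).1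
      exact ⟨n, c, fun _ => h⟩
    · exact ⟨0, 0, fun h => absurd h hz⟩
  choose ν c hν using hrep
  have hsL : ∀ x ∈ L, -x ∈ L := by
    intro x hx
    rw [hLsym] at hx
    exact hx
  have hball : ∃ r > 0, closedBall (0 : E3) r ⊆ L := by
    obtain ⟨x, hx⟩ := hLint
    have h0 : (0 : E3) ∈ openSegment ℝ x (-x) :=
      ⟨1/2, 1/2, by norm_num, by norm_num, by norm_num, by simp⟩
    have h1 := hLconv.openSegment_interior_self_subset_interior hx (hsL x (interior_subset hx)) h0
    exact Metric.nhds_basis_closedBall.mem_iff.mp (mem_interior_iff_mem_nhds.mp h1)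
  have S : Setup K L ν c :=
    { lb := ⟨hLcomp, hLconv, hLstrict, hsL, hball⟩
      kcomp := hKcomp
      kconv := hKconv
      ksym := by
        intro x hx
        rw [hKsym] at hx
        exact hx
      lk := hLK
      nu0 := fun z hz => (hν z hz).1
      plane := fun z hz p hp => (hν z hz).2.2 p ((hΔ z hz).2 hp)
      af := by
        intro z hz w hw h0 s hs
        have h1 := hAF z hz w ⟨((hν z hz).2.1 w).mpr h0, hw⟩
        refine Set.disjoint_left.mp h1 ?_ hs
        have h2 := AffineMap.lineMap_mem_affineSpan_pair s z w
        have h3 : AffineMap.lineMap z w s = z + s • (w - z) := by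
          rw [AffineMap.lineMap_apply, vsub_eq_sub, vadd_eq_add, add_comm]
        rw [h3] at h2
        exact h2 }
  intro u hu
  obtain ⟨v, hv, H⟩ := S.final (u := u) (by rintro rfl; simp at hu)
  refine ⟨v, hv, fun x hx => ?_⟩
  rw [(hν x hx.2).2.1]
  apply H x hx.2
  rw [ip_eq_inner]
  exact Submodule.mem_orthogonal_singleton_iff_inner_right.mp hx.1


end
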